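/- arXiv:1201.5260 — 3 statements merged into one kernel-verified Lean document; each statement's English description precedes it below -/
import Mathlib

section
/- Let q be a prime power and let f ∈ F_q[s,u,t] be a polynomial of total degree d ≥ 1 that remains irreducible over the algebraic closure of F_q. Let H ⊂ (F̄_q)^3 be the zero set of f, let Δ ⊂ (F̄_q)^3 be the zero set of D(s,u,t) = (t^2−4)(s^2−4)(s^2+t^2+u^2−ust−4), and assume H ⊄ Δ. Assume moreover that #H(F_q) ≥ q^2/2, where H(F_q) = {(s,u,t) ∈ (F_q)^3 : f(s,u,t) = 0}. Let N = #{(x,y) ∈ SL(2,q) × SL(2,q) : f(tr(x), tr(xy), tr(y)) = 0}. Then N = #H(F_q)·q^3·(1 + r_2) for some real number r_2 with |r_2| ≤ 157d/q. -/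
open Matrix Polynomial

abbrev SL2 (K : Type) [CommRing K] : Type := Matrix.SpecialLinearGroup (Fin 2) K

abbrev PSL2 (K : Type) [CommRing K] : Type := SL2 K ⧸ Subgroup.center (SL2 K)

/-- Evaluation of a word `w ∈ F₂` at a pair of group elements. -/
def wordEval {G : Type*} [Group G] (w : FreeGroup (Fin 2)) (g₁ g₂ : G) : G :=
  (FreeGroup.lift ![g₁, g₂]) w

/-- The word map `P_{w,G} : G × G → G` for `G = SL(2,K)`. -/
def wordMap (w : FreeGroup (Fin 2)) (K : Type) [CommRing K] :
    SL2 K × SL2 K → SL2 K := fun g => wordEval w g.1 g.2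

/-- The point `(tr x, tr xy, tr y)`. -/
def trPoint {K : Type} [CommRing K] (x y : SL2 K) : Fin 3 → K :=
  ![Matrix.trace (x : Matrix (Fin 2) (Fin 2) K),
    Matrix.trace ((x * y : SL2 K) : Matrix (Fin 2) (Fin 2) K),
    Matrix.trace (y : Matrix (Fin 2) (Fin 2) K)]

/-- `f ∈ ℤ[s,u,t]` is the trace polynomial of the word `w`. -/
def IsTracePolynomial (w : FreeGroup (Fin 2)) (f : MvPolynomial (Fin 3) ℤ) : Prop :=
  ∀ (K : Type) [CommRing K], ∀ x y : SL2 K,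
    Matrix.trace ((wordEval w x y : SL2 K) : Matrix (Fin 2) (Fin 2) K) =
      MvPolynomial.eval (trPoint x y) (MvPolynomial.map (Int.castRingHom K) f)

/-- `f : X → Y` is `ε`-equidistributed. -/
def IsEquidistributed {X Y : Type*} (f : X → Y) (ε : ℝ) : Prop :=
  ∃ Y' : Set Y,
    (1 - ε) * (Nat.card Y) < (Nat.card Y' : ℝ) ∧
    ∀ y ∈ Y',
      |(Nat.card {x : X // f x = y} : ℝ) - (Nat.card X : ℝ) / (Nat.card Y)| <
        ε * (Nat.card X) / (Nat.card Y)

/-- The family of word maps on `SL(2,p^n)` is `p`-equidistributed. -/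
def IsPEquidistributed (w : FreeGroup (Fin 2)) (p : ℕ) (hp : p.Prime) : Prop :=
  letI : Fact p.Prime := ⟨hp⟩
  ∃ ε : ℕ → ℝ,
    Filter.Tendsto (fun n : ℕ => ε (p ^ n)) Filter.atTop (nhds 0) ∧
    ∀ᶠ n : ℕ in Filter.atTop,
      IsEquidistributed (wordMap w (GaloisField p n)) (ε (p ^ n))

/-- The family of word maps on `SL(2,q)`, `q` ranging over all prime powers,
is equidistributed. -/
def IsEquidistributedFamily (w : FreeGroup (Fin 2)) : Prop :=
  ∃ ε : ℕ → ℝ,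
    Filter.Tendsto ε Filter.atTop (nhds 0) ∧
    ∀ (p : ℕ) (hp : p.Prime),
      letI : Fact p.Prime := ⟨hp⟩
      ∀ᶠ n : ℕ in Filter.atTop,
        IsEquidistributed (wordMap w (GaloisField p n)) (ε (p ^ n))

/-- Reduction of an integral polynomial mod `p`. -/
noncomputable def reduceMod (p : ℕ) (P : MvPolynomial (Fin 3) ℤ) : MvPolynomial (Fin 3) (ZMod p) :=
  MvPolynomial.map (Int.castRingHom (ZMod p)) P

/-- `P = h ∘ Q` with `deg Q ≥ 1`, `deg h ≥ 2`. -/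
def IsCompositePoly (F : Type) [CommRing F] (P : MvPolynomial (Fin 3) F) : Prop :=
  ∃ (Q : MvPolynomial (Fin 3) F) (h : Polynomial F),
    1 ≤ Q.totalDegree ∧ 2 ≤ h.natDegree ∧ P = Polynomial.aeval Q h

def IsPComposite (p : ℕ) (P : MvPolynomial (Fin 3) ℤ) : Prop :=
  IsCompositePoly (ZMod p) (reduceMod p P)

/-- `h` is a permutation polynomial of every finite extension of `F_p`. -/
def IsPermAllExt (p : ℕ) (h : Polynomial (ZMod p)) : Prop :=
  ∀ (K : Type) [Field K] [Algebra (ZMod p) K] [Finite K],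
    Function.Bijective fun z : K => Polynomial.aeval z h

def IsPSpecial (p : ℕ) (P : MvPolynomial (Fin 3) ℤ) : Prop :=
  IsPComposite p P ∧
    ∃ (Q : MvPolynomial (Fin 3) (ZMod p)) (h : Polynomial (ZMod p)),
      1 ≤ Q.totalDegree ∧ 2 ≤ h.natDegree ∧
      reduceMod p P = Polynomial.aeval Q h ∧ IsPermAllExt p h

def AlmostNoncomposite (P : MvPolynomial (Fin 3) ℤ) : Prop :=
  ∀ p : ℕ, p.Prime → ¬ IsPComposite p P ∨ IsPSpecial p P

/-- The reduced word `x^{a₁}y^{b₁} ⋯ x^{a_r}y^{b_r}`. -/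
def wordOf {r : ℕ} (a b : Fin r → ℤ) : FreeGroup (Fin 2) :=
  (List.ofFn fun i : Fin r =>
    FreeGroup.of (0 : Fin 2) ^ a i * FreeGroup.of (1 : Fin 2) ^ b i).prod

/-!
Count the pairs `(x, y)` by their trace coordinates `v = (s, u, t)`. If `x` is not central, it is
conjugate to the companion matrix of its characteristic polynomial, so the `y` with `tr (x y) = u`
and `tr y = t` correspond to the points of an affine conic. When `s² ≠ 4` and
`s² + t² + u² - s u t - 4 ≠ 0` the conic is nondegenerate and the fibre over `v` has
`q³ + O(q²)` points; every other fibre still has `O(q³)` points.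

Only `O(d q)` points of `H` are exceptional. By the Nullstellensatz, `f` does not vanish identically
on the planes `s = ± 2` or on the surface `s² + t² + u² - s u t = 4`. The Schwartz-Zippel lemma
bounds the zeros on the planes. The surface is parametrized by `s = a + a⁻¹`, `t = b + b⁻¹`,
`u = a b + (a b)⁻¹`; for `F_q`-points each of `a`, `b` is a root of unity of order dividing `q - 1`
or `q + 1`, and the Schwartz-Zippel lemma applies to the pullback of `f` over this finite grid.
Dividing by `#H q³`, where `#H ≥ q² / 2`, gives the relative error.
-/

open Finset

/-- The Fricke polynomial `s² + t² + u² - s u t - 4` evaluated at `(s, u, t)`. At the trace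
coordinates of a pair in `SL₂` it is `tr [x, y] - 2`, and it vanishes when the pair is reducible. -/
def frickeForm {R : Type*} [CommRing R] (v : Fin 3 → R) : R :=
  v 0 ^ 2 + v 2 ^ 2 + v 1 ^ 2 - v 0 * v 1 * v 2 - 4

theorem exists_eq_mul_one_add_of_abs_sub_le {N M ε : ℝ} (hM : 0 < M) (h : |N - M| ≤ ε * M) :
    ∃ r : ℝ, |r| ≤ ε ∧ N = M * (1 + r) := by
  refine ⟨(N - M) / M, ?_, by field_simp; ring⟩
  rwa [abs_div, abs_of_pos hM, div_le_iff₀ hM]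

section Conic

variable {K : Type*} [Field K]

theorem eq_or_eq_of_quadratic_eq_zero {b c r e : K} (hr : r ^ 2 + b * r + c = 0)
    (he : e ^ 2 + b * e + c = 0) : e = r ∨ e = -b - r := by
  have : (e - r) * (e - (-b - r)) = 0 := by linear_combination he - hr
  simpa only [mul_eq_zero, sub_eq_zero] using this

variable [Fintype K] [DecidableEq K]

theorem card_quadratic_roots_le_two (b c : K) : #{e : K | e ^ 2 + b * e + c = 0} ≤ 2 := by
  by_cases h : ∃ r : K, r ^ 2 + b * r + c = 0
  · obtain ⟨r, hr⟩ := h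
    refine (card_le_card fun e he => ?_).trans (card_le_two (a := r) (b := -b - r))
    simpa using eq_or_eq_of_quadratic_eq_zero hr (mem_filter_univ e |>.1 he)
  · push Not at h
    simp [h]

/-- The affine conic `e² + s e g + g² + α e + β g + γ = 0` in the `(e, g)`-plane. It models the
matrices of determinant `1` having prescribed traces against `1` and a fixed companion matrix of
trace `s`. -/
def affineConic (s α β γ : K) : Finset (K × K) :=
  {p | p.1 ^ 2 + s * p.1 * p.2 + p.2 ^ 2 + α * p.1 + β * p.2 + γ = 0}

theorem mem_affineConic {s α β γ : K} {p : K × K} : p ∈ affineConic s α β γ ↔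
    p.1 ^ 2 + s * p.1 * p.2 + p.2 ^ 2 + α * p.1 + β * p.2 + γ = 0 := by
  simp [affineConic]

theorem card_affineConic_filter_snd_le_two (s α β γ g : K) :
    #{p ∈ affineConic s α β γ | p.2 = g} ≤ 2 := by
  refine (card_le_card_of_injOn Prod.fst ?_ ?_).trans
    (card_quadratic_roots_le_two (s * g + α) (g ^ 2 + β * g + γ))
  · rintro ⟨e, g'⟩ h
    simp only [coe_filter, Set.mem_ofPred_eq, mem_affineConic, mem_univ, true_and] at h ⊢
    obtain ⟨h, rfl⟩ := h
    linear_combination h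
  · intro p hp p' hp' h
    simp only [coe_filter, Set.mem_ofPred_eq] at hp hp'
    exact Prod.ext h (hp.2.trans hp'.2.symm)

theorem card_affineConic_le_two_mul (s α β γ : K) :
    #(affineConic s α β γ) ≤ 2 * Fintype.card K :=
  card_le_mul_card_image_of_maps_to (f := Prod.snd) (t := univ) (by simp) 2
    fun g _ => card_affineConic_filter_snd_le_two s α β γ g

theorem affineConic_nonempty {s : K} (hs : s ^ 2 - 4 ≠ 0) (α β γ : K) :
    (affineConic s α β γ).Nonempty := by
  by_cases h2 : ringChar K = 2
  · have : CharP K 2 := ringChar.of_eq h2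
    have hs0 : s ≠ 0 := by
      rintro rfl
      exact hs (by linear_combination (-2 : K) * (CharTwo.two_eq_zero : (2 : K) = 0))
    obtain ⟨r, hr⟩ := FiniteField.isSquare_of_char_two h2 (-((-α / s) ^ 2 + β * (-α / s) + γ))
    have hα : s * (-α / s) = -α := by field_simp
    exact ⟨(r, -α / s), mem_affineConic.2 (by linear_combination -hr + r * hα)⟩
  · have h20 : (2 : K) ≠ 0 := Ring.two_ne_zero h2
    -- `4 Q(e, g) = (2 e + s g + α)² + (4 - s²) g² + (4 β - 2 s α) g + (4 γ - α²)`
    obtain ⟨a, g, hag⟩ := FiniteField.exists_root_sum_quadratic (f := (X ^ 2 : K[X]))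
      (g := C (4 - s ^ 2) * X ^ 2 + C (4 * β - 2 * s * α) * X + C (4 * γ - α ^ 2)) (by simp)
      (degree_quadratic fun h => hs (by linear_combination -h))
      (FiniteField.odd_card_of_char_ne_two h2)
    simp only [eval_pow, eval_X, eval_add, eval_mul, eval_C] at hag
    refine ⟨((a - s * g - α) / 2, g), mem_affineConic.2 ?_⟩
    field_simp
    linear_combination hag

theorem card_affineConic_eq_of_mem {s α β γ : K} {p : K × K} (hp : p ∈ affineConic s α β γ) :
    #(affineConic s α β γ) =
      #(affineConic s (2 * p.1 + s * p.2 + α) (s * p.1 + 2 * p.2 + β) 0) := by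
  rw [mem_affineConic] at hp
  refine card_equiv (Equiv.subRight p) fun r => ?_
  simp only [mem_affineConic, Equiv.subRight_apply, Prod.fst_sub, Prod.snd_sub]
  exact ⟨fun h => by linear_combination h - hp, fun h => by linear_combination h + hp⟩

/-- Projecting from the origin: the line `e = l g` through the origin of the conic meets it in one
further point unless the slope `l` is a root of `l² + s l + 1` or of `α l + β`. -/
theorem card_affineConic_filter_snd_ne_zero {s α β : K}
    (hΔ : α ^ 2 + β ^ 2 - s * α * β ≠ 0) :
    #{p ∈ affineConic s α β 0 | p.2 ≠ 0} =
      #{l : K | l ^ 2 + s * l + 1 ≠ 0 ∧ α * l + β ≠ 0} := by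
  let secondPoint (l : K) : K := -(α * l + β) / (l ^ 2 + s * l + 1)
  have eq_secondPoint {e g : K} (hg : g ≠ 0) (h : (e, g) ∈ affineConic s α β 0) :
      ((e / g) ^ 2 + s * (e / g) + 1) * g + (α * (e / g) + β) = 0 := by
    rw [mem_affineConic] at h
    field_simp
    linear_combination h
  have quad_ne_zero {l τ : K} (h : (l ^ 2 + s * l + 1) * τ + (α * l + β) = 0) :
      l ^ 2 + s * l + 1 ≠ 0 := fun h0 => hΔ (by
    have hβ : β = -α * l := by linear_combination h - τ * h0
    rw [hβ]
    linear_combination α ^ 2 * h0)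
  refine card_nbij' (fun p => p.1 / p.2) (fun l => (l * secondPoint l, secondPoint l))
    ?_ ?_ ?_ ?_
  · rintro ⟨e, g⟩ h
    simp only [coe_filter, Set.mem_ofPred_eq, mem_univ, true_and] at h ⊢
    have key := eq_secondPoint h.2 h.1
    refine ⟨quad_ne_zero key, fun h0 => ?_⟩
    rw [h0, add_zero] at key
    exact mul_ne_zero (quad_ne_zero (eq_secondPoint h.2 h.1)) h.2 key
  · intro l h
    simp only [coe_filter, Set.mem_ofPred_eq, mem_univ, true_and, mem_affineConic] at h ⊢
    refine ⟨?_, div_ne_zero (neg_ne_zero.2 h.2) h.1⟩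
    have : (l ^ 2 + s * l + 1) * secondPoint l = -(α * l + β) := mul_div_cancel₀ _ h.1
    linear_combination secondPoint l * this
  · rintro ⟨e, g⟩ h
    simp only [coe_filter, Set.mem_ofPred_eq] at h
    have key := eq_secondPoint h.2 h.1
    have hg : secondPoint (e / g) = g := by
      rw [div_eq_iff (quad_ne_zero key)]
      linear_combination -key
    exact Prod.ext (by simp only [hg]; exact div_mul_cancel₀ e h.2) hg
  · intro l h
    simp only [coe_filter, Set.mem_ofPred_eq, mem_univ, true_and] at h
    exact mul_div_cancel_right₀ l (div_ne_zero (neg_ne_zero.2 h.2) h.1)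

theorem card_linear_roots_le_one {α β : K} (h : α ≠ 0 ∨ β ≠ 0) :
    #{l : K | α * l + β = 0} ≤ 1 := by
  refine card_le_one.2 fun l hl m hm => ?_
  rw [mem_filter_univ] at hl hm
  have hα : α ≠ 0 := by
    rintro rfl
    simp_all
  exact mul_left_cancel₀ hα (by linear_combination hl - hm)

theorem card_le_card_admissible_slopes_add_three {s α β : K} (h : α ≠ 0 ∨ β ≠ 0) :
    Fintype.card K ≤ #{l : K | l ^ 2 + s * l + 1 ≠ 0 ∧ α * l + β ≠ 0} + 3 := by
  have hcover : (univ : Finset K) ⊆ ({l : K | l ^ 2 + s * l + 1 ≠ 0 ∧ α * l + β ≠ 0} : Finset K) ∪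
      (({l : K | l ^ 2 + s * l + 1 = 0} : Finset K) ∪ ({l : K | α * l + β = 0} : Finset K)) := by
    intro l _
    simp only [mem_union, mem_filter_univ]
    tauto
  have hquad := card_quadratic_roots_le_two s (1 : K)
  have hlin := card_linear_roots_le_one h
  calc Fintype.card K ≤ _ := card_le_card hcover
    _ ≤ _ := (card_union_le _ _).trans (Nat.add_le_add_left (card_union_le _ _) _)
    _ ≤ _ := by lia

/-- The nonvanishing quantities are, up to integer constants, the determinants of the
quadratic part of the conic and of its homogenization. -/
theorem card_affineConic_bounds {s α β γ : K} (hs : s ^ 2 - 4 ≠ 0)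
    (hΔ : α ^ 2 + β ^ 2 - s * α * β + (s ^ 2 - 4) * γ ≠ 0) :
    #(affineConic s α β γ) ≤ Fintype.card K + 2 ∧
      Fintype.card K ≤ #(affineConic s α β γ) + 3 := by
  obtain ⟨p, hp⟩ := affineConic_nonempty hs α β γ
  rw [card_affineConic_eq_of_mem hp]
  rw [mem_affineConic] at hp
  set α' := 2 * p.1 + s * p.2 + α with hα'
  set β' := s * p.1 + 2 * p.2 + β with hβ'
  have hΔ' : α' ^ 2 + β' ^ 2 - s * α' * β' ≠ 0 := fun h => hΔ (by
    rw [hα', hβ'] at h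
    linear_combination h + (s ^ 2 - 4) * hp)
  have hsplit := card_filter_add_card_filter_not (s := affineConic s α' β' 0) (·.2 = 0)
  rw [card_affineConic_filter_snd_ne_zero hΔ'] at hsplit
  have hzero := card_affineConic_filter_snd_le_two s α' β' 0 0
  have hupper : #{l : K | l ^ 2 + s * l + 1 ≠ 0 ∧ α' * l + β' ≠ 0} ≤ Fintype.card K :=
    card_le_univ _
  have hlower := card_le_card_admissible_slopes_add_three (s := s) (α := α') (β := β')
    (not_and_or.1 fun h => hΔ' (by simp [h.1, h.2]))
  lia

end Conic

section SpecialLinear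

variable {K : Type} [Field K]

theorem SL2_mem_center_iff {x : SL2 K} :
    x ∈ Subgroup.center (SL2 K) ↔ x 0 1 = 0 ∧ x 1 0 = 0 ∧ x 0 0 = x 1 1 := by
  rw [Matrix.SpecialLinearGroup.mem_center_iff]
  constructor
  · rintro ⟨r, -, hr⟩
    simp [← hr]
  · rintro ⟨h01, h10, h⟩
    have hdet := x.det_coe
    rw [det_fin_two, h01, h10, ← h] at hdet
    refine ⟨x 0 0, by rw [Fintype.card_fin]; linear_combination hdet, ?_⟩
    ext i j
    fin_cases i <;> fin_cases j <;> simp [h01, h10, h]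

theorem trace_sq_eq_four_of_mem_center {x : SL2 K} (hx : x ∈ Subgroup.center (SL2 K)) :
    x.1.trace ^ 2 = 4 := by
  obtain ⟨h01, -, h⟩ := SL2_mem_center_iff.1 hx
  have hdet := x.det_coe
  rw [det_fin_two, h01, ← h] at hdet
  rw [trace_fin_two, ← h]
  linear_combination 4 * hdet

/-- The companion matrix of `X² - s X + 1`. -/
def companion (s : K) : SL2 K := ⟨!![0, -1; 1, s], by simp⟩

theorem exists_conj_companion {x : SL2 K} (hx : x ∉ Subgroup.center (SL2 K)) :
    ∃ g : (Matrix (Fin 2) (Fin 2) K)ˣ, g.1 * x.1 = (companion x.1.trace).1 * g.1 := by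
  -- If `v = (p, r)` is a cyclic row vector for `x`, the rows of `g` are `v` and `-v x`.
  obtain ⟨p, r, hpr⟩ : ∃ p r : K,
      r ^ 2 * x 1 0 + p * r * (x 0 0 - x 1 1) - p ^ 2 * x 0 1 ≠ 0 := by
    by_contra! h
    have h01 := h 1 0
    have h10 := h 0 1
    have h11 := h 1 1
    simp only [one_pow, one_mul, zero_pow two_ne_zero, zero_mul, mul_zero, zero_sub,
      add_zero, sub_zero, neg_eq_zero] at h01 h10 h11
    exact hx (SL2_mem_center_iff.2 ⟨h01, h10, by linear_combination h11 - h10 + h01⟩)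
  let g : Matrix (Fin 2) (Fin 2) K :=
    !![p, r; -(p * x 0 0 + r * x 1 0), -(p * x 0 1 + r * x 1 1)]
  have hg : IsUnit g := by
    rw [isUnit_iff_isUnit_det, isUnit_iff_ne_zero, det_fin_two_of]
    exact fun h => hpr (by linear_combination h)
  refine ⟨hg.unit, ?_⟩
  have hdet := x.det_coe
  rw [det_fin_two] at hdet
  have htr := trace_fin_two x.1
  ext i j
  fin_cases i <;> fin_cases j <;>
    simp only [IsUnit.unit_spec, g, companion, mul_apply, Fin.sum_univ_two, Fin.zero_eta,
      Fin.mk_one, of_apply, cons_val', cons_val_zero, cons_val_one, cons_val_fin_one, htr]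
  · ring
  · ring
  · linear_combination p * hdet
  · linear_combination r * hdet

theorem exists_equiv_of_conj {x c : SL2 K} (g : (Matrix (Fin 2) (Fin 2) K)ˣ)
    (h : g.1 * x.1 = c.1 * g.1) :
    ∃ φ : SL2 K ≃ SL2 K, ∀ y : SL2 K,
      (φ y).1.trace = y.1.trace ∧ (c * φ y).1.trace = (x * y).1.trace := by
  refine ⟨⟨fun y => ⟨g.1 * y.1 * g⁻¹.1, by rw [det_units_conj, y.det_coe]⟩,
    fun y => ⟨g⁻¹.1 * y.1 * g.1, by rw [det_units_conj', y.det_coe]⟩,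
    fun y => Subtype.ext (by simp [← mul_assoc]), fun y => Subtype.ext (by simp [mul_assoc])⟩,
    fun y => ⟨trace_units_conj g y.1, ?_⟩⟩
  change (c.1 * (g.1 * y.1 * g⁻¹.1)).trace = (x.1 * y.1).trace
  rw [← trace_units_conj g (x.1 * y.1)]
  simp only [← mul_assoc, h]

theorem card_center_SL2_le_two : Nat.card (Subgroup.center (SL2 K)) ≤ 2 := by
  rw [Nat.card_congr (Matrix.SpecialLinearGroup.center_equiv_rootsOfUnity' (0 : Fin 2)).toEquiv,
    Fintype.card_fin]
  exact card_rootsOfUnity K 2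

variable [Fintype K] [DecidableEq K]

/-- The `y ∈ SL₂(K)` for which `(x, y)` has trace coordinates `(tr x, u, t)`. -/
def traceFiber (x : SL2 K) (u t : K) : Finset (SL2 K) :=
  {y | (x * y).1.trace = u ∧ y.1.trace = t}

theorem mem_traceFiber {x y : SL2 K} {u t : K} :
    y ∈ traceFiber x u t ↔ (x * y).1.trace = u ∧ y.1.trace = t := mem_filter_univ y

theorem card_traceFiber_companion (s u t : K) :
    #(traceFiber (companion s) u t) = #(affineConic s (-t) (u - s * t) 1) := by
  have trace_companion_mul (y : SL2 K) :
      (companion s * y).1.trace = -y 1 0 + (y 0 1 + s * y 1 1) := by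
    change (!![0, -1; 1, s] * y.1).trace = _
    simp only [trace_fin_two, mul_apply, Fin.sum_univ_two, of_apply, cons_val', cons_val_zero,
      cons_val_one, cons_val_fin_one]
    ring
  refine card_bij' (fun y _ => (y 0 0, y 1 0))
    (fun p hp => ⟨!![p.1, u + p.2 - s * (t - p.1); p.2, t - p.1], ?_⟩) ?_ ?_ ?_ ?_
  · rw [mem_affineConic] at hp
    rw [det_fin_two_of]
    linear_combination -hp
  · intro y hy
    rw [mem_traceFiber, trace_companion_mul, trace_fin_two] at hy
    have hdet := y.det_coe
    rw [det_fin_two] at hdet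
    rw [mem_affineConic]
    obtain ⟨rfl, rfl⟩ := hy
    linear_combination -hdet
  · intro p hp
    rw [mem_affineConic] at hp
    refine mem_traceFiber.2 ⟨(trace_companion_mul _).trans ?_, (trace_fin_two _).trans ?_⟩ <;> simp
  · intro y hy
    rw [mem_traceFiber, trace_companion_mul, trace_fin_two] at hy
    obtain ⟨rfl, rfl⟩ := hy
    ext i j
    fin_cases i <;> fin_cases j <;> simp
  · simp

theorem card_traceFiber_of_notMem_center {x : SL2 K} (hx : x ∉ Subgroup.center (SL2 K))
    (u t : K) :
    #(traceFiber x u t) = #(affineConic x.1.trace (-t) (u - x.1.trace * t) 1) := by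
  obtain ⟨g, hg⟩ := exists_conj_companion hx
  obtain ⟨φ, hφ⟩ := exists_equiv_of_conj g hg
  rw [← card_traceFiber_companion]
  exact card_equiv φ fun y => by rw [mem_traceFiber, mem_traceFiber, (hφ y).1, (hφ y).2]

theorem card_trace_eq_filter_ne_zero (s : K) :
    #{x : SL2 K | x.1.trace = s ∧ x 1 0 ≠ 0} = Fintype.card K * (Fintype.card K - 1) := by
  have hcard : #((univ : Finset K) ×ˢ univ.erase (0 : K)) =
      Fintype.card K * (Fintype.card K - 1) := by
    rw [card_product, card_erase_of_mem (mem_univ _), card_univ]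
  rw [← hcard]
  refine card_bij' (fun x _ => (x 0 0, x 1 0))
    (fun p hp => ⟨!![p.1, (p.1 * (s - p.1) - 1) / p.2; p.2, s - p.1], ?_⟩) ?_ ?_ ?_ ?_
  · have h0 : p.2 ≠ 0 := by simpa using hp
    rw [det_fin_two_of]
    field_simp
    ring
  · intro x hx
    simpa using (mem_filter_univ x |>.1 hx).2
  · intro p hp
    have h0 : p.2 ≠ 0 := by simpa using hp
    exact (mem_filter_univ _).2 ⟨(trace_fin_two _).trans (by simp), by simpa using h0⟩
  · intro x hx
    obtain ⟨rfl, h0⟩ := mem_filter_univ x |>.1 hx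
    have hdet := x.det_coe
    rw [det_fin_two] at hdet
    ext i j
    fin_cases i <;> fin_cases j
    · rfl
    · refine (div_eq_iff h0).2 ?_
      change x 0 0 * (x.1.trace - x 0 0) - 1 = x 0 1 * x 1 0
      rw [trace_fin_two]
      linear_combination hdet
    · rfl
    · exact sub_eq_of_eq_add' (trace_fin_two _)
  · simp

theorem card_trace_eq_filter_eq_zero_le (s : K) :
    #{x : SL2 K | x.1.trace = s ∧ x 1 0 = 0} ≤ 2 * Fintype.card K := by
  have hcard : #(({e : K | e ^ 2 + -s * e + 1 = 0} : Finset K) ×ˢ (univ : Finset K)) ≤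
      2 * Fintype.card K := by
    rw [card_product, card_univ]
    exact Nat.mul_le_mul_right _ (card_quadratic_roots_le_two _ _)
  refine (card_le_card_of_injOn (fun x => (x 0 0, x 0 1)) ?_ ?_).trans hcard
  · intro x hx
    rw [mem_coe, mem_filter_univ] at hx
    obtain ⟨rfl, h0⟩ := hx
    have hdet := x.det_coe
    rw [det_fin_two, h0] at hdet
    simp only [coe_product, Set.mem_prod, mem_coe, mem_filter_univ, mem_univ, and_true]
    rw [trace_fin_two]
    linear_combination -hdet
  · intro x hx y hy h
    rw [mem_coe, mem_filter_univ, trace_fin_two] at hx hy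
    obtain ⟨h00, h01⟩ := Prod.ext_iff.1 h
    simp only at h00 h01
    ext i j
    fin_cases i <;> fin_cases j
    · exact h00
    · exact h01
    · exact hx.2.trans hy.2.symm
    · exact add_left_cancel ((hx.1.trans hy.1.symm).trans (congrArg (· + _) h00.symm))

theorem card_trace_eq_le (s : K) :
    #{x : SL2 K | x.1.trace = s} ≤ Fintype.card K ^ 2 + Fintype.card K := by
  have hsplit := card_filter_add_card_filter_not (s := {x : SL2 K | x.1.trace = s}) (· 1 0 = 0)
  rw [filter_filter, filter_filter, card_trace_eq_filter_ne_zero] at hsplit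
  have hzero := card_trace_eq_filter_eq_zero_le s
  have hpos := Fintype.card_pos (α := K)
  zify [hpos] at *
  nlinarith

theorem le_card_trace_eq (s : K) :
    Fintype.card K * (Fintype.card K - 1) ≤ #{x : SL2 K | x.1.trace = s} := by
  rw [← card_trace_eq_filter_ne_zero s]
  exact card_le_card (monotone_filter_right _ fun _ _ h => h.1)

/-- The pairs in `SL₂(K) × SL₂(K)` with trace coordinates `v`. -/
def trPointFiber (v : Fin 3 → K) : Finset (SL2 K × SL2 K) := {g | trPoint g.1 g.2 = v}

theorem card_trPointFiber (v : Fin 3 → K) :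
    #(trPointFiber v) = ∑ x : SL2 K with x.1.trace = v 0, #(traceFiber x (v 1) (v 2)) := by
  rw [← card_sigma]
  refine card_nbij' (fun g => ⟨g.1, g.2⟩) (fun g => (g.1, g.2)) ?_ ?_ (fun _ _ => rfl)
    fun _ _ => rfl
  · intro g hg
    have hv : trPoint g.1 g.2 = v := (mem_filter_univ g).1 hg
    rw [mem_coe, mem_sigma, mem_filter_univ, mem_traceFiber, ← hv]
    exact ⟨rfl, rfl, rfl⟩
  · rintro ⟨x, y⟩ hg
    rw [mem_coe, mem_sigma, mem_filter_univ, mem_traceFiber] at hg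
    refine (mem_filter_univ _).2 (funext fun i => ?_)
    fin_cases i
    exacts [hg.1, hg.2.1, hg.2.2]

theorem card_trPointFiber_eq_mul {v : Fin 3 → K} (hs : v 0 ^ 2 ≠ 4) :
    #(trPointFiber v) = #{x : SL2 K | x.1.trace = v 0} *
      #(affineConic (v 0) (-v 2) (v 1 - v 0 * v 2) 1) := by
  rw [card_trPointFiber, ← smul_eq_mul, ← sum_const]
  refine sum_congr rfl fun x hx => ?_
  rw [mem_filter_univ] at hx
  rw [card_traceFiber_of_notMem_center, hx]
  exact fun hc => hs (hx ▸ trace_sq_eq_four_of_mem_center hc)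

theorem abs_card_trPointFiber_sub_le_of_ne {v : Fin 3 → K} (hs : v 0 ^ 2 ≠ 4)
    (hv : frickeForm v ≠ 0) :
    |(#(trPointFiber v) : ℝ) - (Fintype.card K : ℝ) ^ 3| ≤ 5 * (Fintype.card K : ℝ) ^ 2 := by
  obtain ⟨hC, hC'⟩ := card_affineConic_bounds (s := v 0) (α := -v 2) (β := v 1 - v 0 * v 2)
    (γ := 1) (sub_ne_zero.2 hs) fun h => hv (by rw [frickeForm]; linear_combination h)
  have hm := card_trace_eq_le (v 0)
  have hm' := le_card_trace_eq (v 0)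
  rw [card_trPointFiber_eq_mul hs]
  generalize #{x : SL2 K | x.1.trace = v 0} = m at *
  generalize #(affineConic (v 0) (-v 2) (v 1 - v 0 * v 2) 1) = C at *
  have hq : 1 ≤ Fintype.card K := Fintype.card_pos
  generalize Fintype.card K = q at *
  have hupper : m * C ≤ (q ^ 2 + q) * (q + 2) := Nat.mul_le_mul hm hC
  have hlower : q * (q - 1) * (q - 3) ≤ m * C := Nat.mul_le_mul hm' (by lia)
  have hlower' : q ^ 3 ≤ m * C + 4 * q ^ 2 := by
    rcases le_total q 3 with h3 | h3
    · calc q ^ 3 = q ^ 2 * q := pow_succ q 2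
        _ ≤ q ^ 2 * 4 := Nat.mul_le_mul_left _ (by lia)
        _ ≤ m * C + 4 * q ^ 2 := by lia
    · zify [hq, h3] at hlower ⊢
      nlinarith
  have hupper' : m * C ≤ q ^ 3 + 5 * q ^ 2 := by nlinarith [hupper]
  rw [abs_le]
  constructor
  · have : (q : ℝ) ^ 3 ≤ m * C + 4 * q ^ 2 := mod_cast hlower'
    push_cast
    linarith [sq_nonneg (q : ℝ)]
  · have : (m : ℝ) * C ≤ q ^ 3 + 5 * q ^ 2 := mod_cast hupper'
    push_cast
    linarith

theorem card_traceFiber_le (x : SL2 K) (u t : K) :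
    #(traceFiber x u t) ≤ Fintype.card K ^ 2 + Fintype.card K :=
  (card_le_card fun y hy => by simpa using (mem_traceFiber.1 hy).2).trans (card_trace_eq_le t)

theorem card_trPointFiber_le (v : Fin 3 → K) :
    #(trPointFiber v) ≤
      2 * (Fintype.card K ^ 2 + Fintype.card K) * (Fintype.card K + 1) := by
  classical
  have hcenter : #{x : SL2 K | x ∈ Subgroup.center (SL2 K)} ≤ 2 := by
    rw [← Fintype.card_subtype, ← Nat.card_eq_fintype_card]
    exact card_center_SL2_le_two
  have hcentral : ∑ x : SL2 K with x.1.trace = v 0 ∧ x ∈ Subgroup.center (SL2 K),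
      #(traceFiber x (v 1) (v 2)) ≤ 2 * (Fintype.card K ^ 2 + Fintype.card K) :=
    (sum_le_card_nsmul _ _ _ fun x _ => card_traceFiber_le x _ _).trans
      (Nat.mul_le_mul_right _
        ((card_le_card (monotone_filter_right _ fun _ _ h => h.2)).trans hcenter))
  have hnoncentral : ∑ x : SL2 K with x.1.trace = v 0 ∧ x ∉ Subgroup.center (SL2 K),
      #(traceFiber x (v 1) (v 2)) ≤
        (Fintype.card K ^ 2 + Fintype.card K) * (2 * Fintype.card K) := by
    refine (sum_le_card_nsmul _ _ (2 * Fintype.card K) fun x hx => ?_).trans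
      (Nat.mul_le_mul_right _
        ((card_le_card (monotone_filter_right _ fun _ _ h => h.1)).trans (card_trace_eq_le (v 0))))
    rw [card_traceFiber_of_notMem_center ((mem_filter_univ x).1 hx).2]
    exact card_affineConic_le_two_mul _ _ _ _
  rw [card_trPointFiber, ← sum_filter_add_sum_filter_not _ (· ∈ Subgroup.center (SL2 K)),
    filter_filter, filter_filter]
  linarith

theorem abs_card_trPointFiber_sub_le (v : Fin 3 → K) :
    |(#(trPointFiber v) : ℝ) - (Fintype.card K : ℝ) ^ 3| ≤ 5 * (Fintype.card K : ℝ) ^ 3 := by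
  have hq : 2 ≤ Fintype.card K := Fintype.one_lt_card
  have hupper := card_trPointFiber_le v
  generalize Fintype.card K = q at *
  have hupper' : #(trPointFiber v) ≤ 6 * q ^ 3 := by nlinarith
  have : (#(trPointFiber v) : ℝ) ≤ 6 * (q : ℝ) ^ 3 := mod_cast hupper'
  rw [abs_le]
  constructor
  · nlinarith [pow_nonneg (Nat.cast_nonneg (α := ℝ) q) 3,
      Nat.cast_nonneg (α := ℝ) #(trPointFiber v)]
  · linarith

end SpecialLinear

theorem totalDegree_aeval_le {σ τ R : Type*} [CommSemiring R] {g : σ → MvPolynomial τ R} {e : ℕ}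
    (hg : ∀ i, (g i).totalDegree ≤ e) (f : MvPolynomial σ R) :
    (MvPolynomial.aeval g f).totalDegree ≤ f.totalDegree * e := by
  rw [MvPolynomial.aeval_def, MvPolynomial.eval₂_eq]
  refine MvPolynomial.totalDegree_finsetSum_le fun m hm => ?_
  calc _ ≤ 0 + ∑ i ∈ m.support, (g i ^ m i).totalDegree :=
        (MvPolynomial.totalDegree_mul _ _).trans (add_le_add (MvPolynomial.totalDegree_C _).le
          (MvPolynomial.totalDegree_finsetProd _ _))
    _ ≤ ∑ i ∈ m.support, m i * e := by
        rw [zero_add]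
        exact sum_le_sum fun i _ =>
          (MvPolynomial.totalDegree_pow _ _).trans (Nat.mul_le_mul_left _ (hg i))
    _ = (m.sum fun _ k => k) * e := (sum_mul _ _ _).symm
    _ ≤ f.totalDegree * e := Nat.mul_le_mul_right _ (MvPolynomial.le_totalDegree hm)

/-- The polynomial `F` of total degree `d`, homogenized and evaluated at `(num, den)`: it is
`den ^ d * F (num / den)` with denominators cleared. -/
noncomputable def homogenizedAeval {σ R A : Type*} [CommSemiring R] [CommSemiring A] [Algebra R A]
    (num : σ → A) (den : A) (F : MvPolynomial σ R) : A :=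
  ∑ m ∈ F.support, algebraMap R A (F.coeff m) *
    (den ^ (F.totalDegree - m.degree) * ∏ i ∈ m.support, num i ^ m i)

theorem map_homogenizedAeval {σ R A B : Type*} [CommSemiring R] [CommSemiring A] [CommSemiring B]
    [Algebra R A] [Algebra R B] (φ : A →ₐ[R] B) (num : σ → A) (den : A) (F : MvPolynomial σ R) :
    φ (homogenizedAeval num den F) = homogenizedAeval (fun i => φ (num i)) (φ den) F := by
  simp only [homogenizedAeval, map_sum, map_mul, map_pow, map_prod, AlgHom.commutes]

theorem homogenizedAeval_mul {σ R A : Type*} [CommSemiring R] [CommSemiring A] [Algebra R A]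
    (den : A) (x : σ → A) (F : MvPolynomial σ R) :
    homogenizedAeval (fun i => den * x i) den F =
      den ^ F.totalDegree * MvPolynomial.aeval x F := by
  rw [MvPolynomial.aeval_def, MvPolynomial.eval₂_eq, homogenizedAeval, mul_sum]
  refine sum_congr rfl fun m hm => ?_
  have hm' : m.degree ≤ F.totalDegree := MvPolynomial.le_totalDegree hm
  have hden : ∏ i ∈ m.support, den ^ m i = den ^ m.degree := prod_pow_eq_pow_sum _ _ _
  simp only [mul_pow, prod_mul_distrib]
  rw [hden, ← Nat.sub_add_cancel hm', pow_add, Nat.add_sub_cancel]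
  ring

theorem totalDegree_homogenizedAeval_le {σ τ R : Type*} [CommSemiring R]
    {num : σ → MvPolynomial τ R} {den : MvPolynomial τ R} {e : ℕ}
    (hnum : ∀ i, (num i).totalDegree ≤ e) (hden : den.totalDegree ≤ e) (F : MvPolynomial σ R) :
    (homogenizedAeval num den F).totalDegree ≤ F.totalDegree * e := by
  refine MvPolynomial.totalDegree_finsetSum_le fun m hm => ?_
  have hm' : m.degree ≤ F.totalDegree := MvPolynomial.le_totalDegree hm
  calc _ ≤ 0 + ((den ^ (F.totalDegree - m.degree)).totalDegree +
          ∑ i ∈ m.support, (num i ^ m i).totalDegree) :=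
        (MvPolynomial.totalDegree_mul _ _).trans (add_le_add (MvPolynomial.totalDegree_C _).le
          ((MvPolynomial.totalDegree_mul _ _).trans
            (add_le_add_right (MvPolynomial.totalDegree_finsetProd _ _) _)))
    _ ≤ (F.totalDegree - m.degree) * e + ∑ i ∈ m.support, m i * e := by
        rw [zero_add]
        exact add_le_add
          ((MvPolynomial.totalDegree_pow _ _).trans (Nat.mul_le_mul_left _ hden))
          (sum_le_sum fun i _ =>
            (MvPolynomial.totalDegree_pow _ _).trans (Nat.mul_le_mul_left _ (hnum i)))
    _ = (F.totalDegree - m.degree) * e + m.degree * e := by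
        rw [← sum_mul, Finsupp.degree_apply]
    _ = F.totalDegree * e := by rw [← add_mul, Nat.sub_add_cancel hm']

theorem card_zeros_piFinset_le {R L : Type*} [CommRing R] [CommRing L] [IsDomain L]
    [DecidableEq L] [Algebra R L] [FaithfulSMul R L] {n : ℕ} {p : MvPolynomial (Fin (n + 1)) R}
    (hp : p ≠ 0) (S : Finset L) :
    #{x ∈ Fintype.piFinset fun _ => S | MvPolynomial.aeval x p = 0} ≤
      p.totalDegree * #S ^ n := by
  have hp' : p.map (algebraMap R L) ≠ 0 := by
    rwa [Ne, map_eq_zero_iff _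
      (MvPolynomial.map_injective _ (FaithfulSMul.algebraMap_injective R L))]
  rcases S.eq_empty_or_nonempty with rfl | hS
  · simp
  have hS' : 0 < (#S : ℚ≥0) := mod_cast hS.card_pos
  have h := MvPolynomial.schwartz_zippel_totalDegree hp' S
  rw [div_le_div_iff₀ (pow_pos hS' _) hS', pow_succ, ← mul_assoc,
    mul_le_mul_iff_left₀ hS'] at h
  simp only [MvPolynomial.eval_map, ← MvPolynomial.aeval_def] at h
  exact (mod_cast h : _ ≤ _).trans
    (Nat.mul_le_mul_right _ (sup_mono (MvPolynomial.support_map_subset _ _)))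

/-- The restriction of `f` to the hyperplane where the first coordinate is `c`. -/
noncomputable def sliceAt {R : Type*} [CommRing R] {n : ℕ} (c : R)
    (f : MvPolynomial (Fin (n + 1)) R) : MvPolynomial (Fin n) R :=
  MvPolynomial.aeval (Fin.cons (MvPolynomial.C c) MvPolynomial.X) f

theorem aeval_tail_sliceAt {R S : Type*} [CommRing R] [CommRing S] [Algebra R S] {n : ℕ} {c : R}
    {v : Fin (n + 1) → S} (hv : v 0 = algebraMap R S c) (f : MvPolynomial (Fin (n + 1)) R) :
    MvPolynomial.aeval (Fin.tail v) (sliceAt c f) = MvPolynomial.aeval v f := by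
  rw [sliceAt, MvPolynomial.comp_aeval_apply]
  congr 2
  funext i
  refine Fin.cases ?_ (fun j => ?_) i
  · rw [Fin.cons_zero, MvPolynomial.aeval_C, hv]
  · rw [Fin.cons_succ, MvPolynomial.aeval_X, Fin.tail]

theorem totalDegree_sliceAt_le {R : Type*} [CommRing R] {n : ℕ} (c : R)
    (f : MvPolynomial (Fin (n + 1)) R) : (sliceAt c f).totalDegree ≤ f.totalDegree := by
  refine (totalDegree_aeval_le (e := 1) (fun i => ?_) f).trans (mul_one _).le
  refine Fin.cases ?_ (fun j => ?_) i
  · exact (MvPolynomial.totalDegree_C c).trans_le zero_le_one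
  · exact (MvPolynomial.totalDegree_monomial_le _ _).trans_eq (by simp)

theorem card_zeros_slice_le {K L : Type*} [Field K] [Fintype K] [DecidableEq K] [CommRing L]
    [Algebra K L] {n : ℕ} {f : MvPolynomial (Fin (n + 2)) K} {c : K} {v : Fin (n + 2) → L}
    (hv0 : v 0 = algebraMap K L c) (hv : MvPolynomial.aeval v f ≠ 0) :
    #{w : Fin (n + 2) → K | MvPolynomial.eval w f = 0 ∧ w 0 = c} ≤
      f.totalDegree * Fintype.card K ^ n := by
  have hslice : sliceAt c f ≠ 0 := fun h => hv (by rw [← aeval_tail_sliceAt hv0, h, map_zero])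
  calc _ ≤ #{x ∈ Fintype.piFinset fun _ => (univ : Finset K) |
        MvPolynomial.aeval x (sliceAt c f) = 0} := by
        refine card_le_card_of_injOn Fin.tail ?_ ?_
        · intro w hw
          rw [mem_coe, mem_filter_univ] at hw
          rw [mem_coe, mem_filter, aeval_tail_sliceAt hw.2, MvPolynomial.aeval_eq_eval]
          exact ⟨Fintype.mem_piFinset.2 fun _ => mem_univ _, hw.1⟩
        · intro w hw w' hw' h
          rw [mem_coe, mem_filter_univ] at hw hw'
          rw [← Fin.cons_self_tail w, ← Fin.cons_self_tail w', h, hw.2, hw'.2]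
    _ ≤ _ := card_zeros_piFinset_le hslice univ
    _ ≤ _ := Nat.mul_le_mul_right _ (totalDegree_sliceAt_le c f)

theorem map_frickeForm {R S : Type*} [CommRing R] [CommRing S] (φ : R →+* S) (v : Fin 3 → R) :
    φ (frickeForm v) = frickeForm fun i => φ (v i) := by
  simp only [frickeForm, map_sub, map_add, map_mul, map_pow, map_ofNat]

/-- The parametrization of the surface `frickeForm = 0` by the traces of `x`, `x y` and `y`, where
`x = diag (a, a⁻¹)` and `y = diag (b, b⁻¹)` with `(a, b) = (p 0, p 1)`. -/
def frickeParam {L : Type*} [Field L] (p : Fin 2 → L) : Fin 3 → L :=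
  ![p 0 + (p 0)⁻¹, p 0 * p 1 + (p 0 * p 1)⁻¹, p 1 + (p 1)⁻¹]

theorem exists_eq_add_inv {L : Type*} [Field L] [IsAlgClosed L] (s : L) :
    ∃ a : L, a ≠ 0 ∧ s = a + a⁻¹ := by
  obtain ⟨a, ha⟩ := IsAlgClosed.exists_root (C 1 * X ^ 2 + C (-s) * X + C 1 : L[X])
    (by rw [degree_quadratic one_ne_zero]; exact two_ne_zero)
  have ha' : 1 * a ^ 2 + -s * a + 1 = 0 := by
    simpa only [IsRoot.def, eval_add, eval_mul, eval_pow, eval_C, eval_X] using ha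
  have ha0 : a ≠ 0 := by
    rintro rfl
    simp at ha'
  refine ⟨a, ha0, ?_⟩
  field_simp
  linear_combination -ha'

theorem exists_frickeParam_eq {L : Type*} [Field L] [IsAlgClosed L] {v : Fin 3 → L}
    (hv : frickeForm v = 0) : ∃ p : Fin 2 → L, (∀ i, p i ≠ 0) ∧ frickeParam p = v := by
  obtain ⟨a, ha, hs⟩ := exists_eq_add_inv (v 0)
  obtain ⟨b, hb, ht⟩ := exists_eq_add_inv (v 2)
  -- For fixed `s` and `t` the form is a quadratic in `u` whose roots come from `b` and `b⁻¹`.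
  have hu : (v 1 - (a * b + (a * b)⁻¹)) * (v 1 - (a * b⁻¹ + (a * b⁻¹)⁻¹)) = 0 := by
    rw [← hv, frickeForm, hs, ht]
    field_simp
    ring
  rcases mul_eq_zero.1 hu with hu | hu
  · refine ⟨![a, b], Fin.forall_fin_two.2 ⟨ha, hb⟩, funext fun i => ?_⟩
    fin_cases i
    exacts [hs.symm, (sub_eq_zero.1 hu).symm, ht.symm]
  · refine ⟨![a, b⁻¹], Fin.forall_fin_two.2 ⟨ha, inv_ne_zero hb⟩, funext fun i => ?_⟩
    fin_cases i
    exacts [hs.symm, (sub_eq_zero.1 hu).symm, by simp [frickeParam, ht, add_comm]]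

/-- The pullback of `f` along `frickeParam`, multiplied by a power of `X₀ X₁` that clears
denominators. -/
noncomputable def frickePullback {K : Type*} [CommRing K] (f : MvPolynomial (Fin 3) K) :
    MvPolynomial (Fin 2) K :=
  let a := MvPolynomial.X 0
  let b := MvPolynomial.X 1
  homogenizedAeval ![a ^ 2 * b + b, a ^ 2 * b ^ 2 + 1, a * b ^ 2 + a] (a * b) f

theorem aeval_frickePullback {K L : Type*} [CommRing K] [Field L] [Algebra K L] {p : Fin 2 → L}
    (hp : ∀ i, p i ≠ 0) (f : MvPolynomial (Fin 3) K) :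
    MvPolynomial.aeval p (frickePullback f) =
      (p 0 * p 1) ^ f.totalDegree * MvPolynomial.aeval (frickeParam p) f := by
  have h0 := hp 0
  have h1 := hp 1
  rw [frickePullback, map_homogenizedAeval, ← homogenizedAeval_mul]
  congr 1
  · funext i
    fin_cases i <;> simp [frickeParam] <;> field_simp
  · simp

theorem totalDegree_frickePullback_le {K : Type*} [Field K] (f : MvPolynomial (Fin 3) K) :
    (frickePullback f).totalDegree ≤ f.totalDegree * 4 := by
  have hX (i : Fin 2) : (MvPolynomial.X i : MvPolynomial (Fin 2) K).totalDegree ≤ 1 :=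
    (MvPolynomial.totalDegree_X i).le
  have hpow (i : Fin 2) : (MvPolynomial.X i ^ 2 : MvPolynomial (Fin 2) K).totalDegree ≤ 2 :=
    (MvPolynomial.totalDegree_X_pow i 2).le
  have hmul {p r : MvPolynomial (Fin 2) K} {m n : ℕ} (hp : p.totalDegree ≤ m)
      (hr : r.totalDegree ≤ n) (hmn : m + n ≤ 4 := by norm_num) : (p * r).totalDegree ≤ 4 :=
    ((MvPolynomial.totalDegree_mul _ _).trans (add_le_add hp hr)).trans hmn
  have hadd {p r : MvPolynomial (Fin 2) K} (hp : p.totalDegree ≤ 4) (hr : r.totalDegree ≤ 4) :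
      (p + r).totalDegree ≤ 4 :=
    (MvPolynomial.totalDegree_add _ _).trans (max_le hp hr)
  have hX' (i : Fin 2) := (hX i).trans (show 1 ≤ 4 by norm_num)
  refine totalDegree_homogenizedAeval_le (fun i => ?_) (hmul (hX 0) (hX 1)) f
  fin_cases i
  · exact hadd (hmul (hpow 0) (hX 1)) (hX' 1)
  · exact hadd (hmul (hpow 0) (hpow 1)) (MvPolynomial.totalDegree_one.trans_le (Nat.zero_le 4))
  · exact hadd (hmul (hX 0) (hpow 1)) (hX' 0)

/-- A set containing all nonzero `a` with `a + a⁻¹` in the field of `q` elements, as Frobenius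
then maps `a` to `a` or to `a⁻¹`. -/
noncomputable def eigenvalueSet (L : Type*) [Field L] [DecidableEq L] (q : ℕ) : Finset L :=
  nthRootsFinset (q - 1) 1 ∪ nthRootsFinset (q + 1) 1

theorem card_nthRootsFinset_le {L : Type*} [CommRing L] [IsDomain L] (n : ℕ) (a : L) :
    #(nthRootsFinset n a) ≤ n := by
  classical
  rw [nthRootsFinset_def]
  exact (Multiset.toFinset_card_le _).trans (card_nthRoots n a)

theorem card_eigenvalueSet_le (L : Type*) [Field L] [DecidableEq L] {q : ℕ} (hq : 0 < q) :
    #(eigenvalueSet L q) ≤ 2 * q := by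
  have hsub := card_nthRootsFinset_le (q - 1) (1 : L)
  have hadd := card_nthRootsFinset_le (q + 1) (1 : L)
  refine (card_union_le _ _).trans ?_
  lia

theorem mem_eigenvalueSet {K L : Type*} [Field K] [Fintype K] [Field L] [DecidableEq L]
    [Algebra K L] {a : L} (ha : a ≠ 0) {s : K} (hs : algebraMap K L s = a + a⁻¹) :
    a ∈ eigenvalueSet L (Fintype.card K) := by
  have hq : 1 < Fintype.card K := Fintype.one_lt_card
  rw [eigenvalueSet, mem_union, mem_nthRootsFinset (by lia), mem_nthRootsFinset (by lia)]
  have hfrob : a ^ Fintype.card K + (a ^ Fintype.card K)⁻¹ = a + a⁻¹ := by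
    have h := congrArg (FiniteField.frobeniusAlgHom K L) hs
    rw [AlgHom.commutes, map_add, map_inv₀, FiniteField.coe_frobeniusAlgHom, hs] at h
    exact h.symm
  have hfactor : (a ^ Fintype.card K - a) * (a ^ Fintype.card K * a - 1) = 0 := by
    have hpow : a ^ Fintype.card K ≠ 0 := pow_ne_zero _ ha
    generalize a ^ Fintype.card K = y at *
    field_simp at hfrob
    linear_combination hfrob
  refine (mul_eq_zero.1 hfactor).imp (fun h => ?_) fun h => ?_
  · refine mul_right_cancel₀ ha ?_
    rw [← pow_succ, Nat.sub_add_cancel hq.le, one_mul]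
    exact sub_eq_zero.1 h
  · rw [pow_succ]
    exact sub_eq_zero.1 h

section BadPoints

variable {K L : Type*} [Field K] [Fintype K] [DecidableEq K] [Field L] [Algebra K L]
  [IsAlgClosed L] {f : MvPolynomial (Fin 3) K}

theorem card_zeros_frickeForm_le {v : Fin 3 → L} (hv : frickeForm v = 0)
    (hfv : MvPolynomial.aeval v f ≠ 0) :
    #{w : Fin 3 → K | MvPolynomial.eval w f = 0 ∧ frickeForm w = 0} ≤
      8 * f.totalDegree * Fintype.card K := by
  classical
  obtain ⟨p, hp, rfl⟩ := exists_frickeParam_eq hv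
  have hne : frickePullback f ≠ 0 := fun h =>
    mul_ne_zero (pow_ne_zero f.totalDegree (mul_ne_zero (hp 0) (hp 1))) hfv (by
      rw [← aeval_frickePullback hp, h, map_zero])
  set S := eigenvalueSet L (Fintype.card K)
  have hcover : ({w : Fin 3 → K | MvPolynomial.eval w f = 0 ∧ frickeForm w = 0} : Finset _).image
      (algebraMap K L ∘ ·) ⊆ {x ∈ Fintype.piFinset fun _ : Fin 2 => S |
        MvPolynomial.aeval x (frickePullback f) = 0}.image frickeParam := by
    intro w' hw'
    obtain ⟨w, hw, rfl⟩ := mem_image.1 hw'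
    obtain ⟨hfw, hw⟩ := (mem_filter_univ w).1 hw
    obtain ⟨p, hp, hpw⟩ := exists_frickeParam_eq (v := algebraMap K L ∘ w)
      ((map_frickeForm (algebraMap K L) w).symm.trans (by rw [hw, map_zero]))
    refine mem_image.2 ⟨p, mem_filter.2 ⟨Fintype.mem_piFinset.2 <| Fin.forall_fin_two.2
      ⟨mem_eigenvalueSet (s := w 0) (hp 0) (congrFun hpw 0).symm,
        mem_eigenvalueSet (s := w 2) (hp 1) (congrFun hpw 2).symm⟩, ?_⟩, hpw⟩
    rw [aeval_frickePullback hp, hpw, MvPolynomial.aeval_algebraMap_apply,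
      MvPolynomial.aeval_eq_eval]
    simp [hfw]
  calc _ = _ := (card_image_of_injective _ (algebraMap K L).injective.comp_left).symm
    _ ≤ _ := (card_le_card hcover).trans card_image_le
    _ ≤ (frickePullback f).totalDegree * #S ^ 1 := card_zeros_piFinset_le hne S
    _ ≤ (f.totalDegree * 4) * (2 * Fintype.card K) := by
        rw [pow_one]
        exact Nat.mul_le_mul (totalDegree_frickePullback_le f)
          (card_eigenvalueSet_le L Fintype.card_pos)
    _ = _ := by ring

theorem card_bad_zeros_le (hplanes : ∀ c : K, c ^ 2 = 4 → ∃ v : Fin 3 → L,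
      v 0 = algebraMap K L c ∧ MvPolynomial.aeval v f ≠ 0)
    (hsurface : ∃ v : Fin 3 → L, frickeForm v = 0 ∧ MvPolynomial.aeval v f ≠ 0) :
    #{w : Fin 3 → K | MvPolynomial.eval w f = 0 ∧ (w 0 ^ 2 = 4 ∨ frickeForm w = 0)} ≤
      10 * f.totalDegree * Fintype.card K := by
  have hslice {c : K} (hc : c ^ 2 = 4) : #{w : Fin 3 → K | MvPolynomial.eval w f = 0 ∧ w 0 = c} ≤
      f.totalDegree * Fintype.card K ^ 1 := by
    obtain ⟨v, hv0, hv⟩ := hplanes c hc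
    exact card_zeros_slice_le hv0 hv
  have htwo := hslice (c := 2) (by norm_num)
  have hnegTwo := hslice (c := -2) (by norm_num)
  obtain ⟨v, hv, hfv⟩ := hsurface
  have hfricke := card_zeros_frickeForm_le hv hfv
  have hsq (w : Fin 3 → K) : w 0 ^ 2 = 4 ↔ w 0 = 2 ∨ w 0 = -2 := by
    rw [← sq_eq_sq_iff_eq_or_eq_neg]
    norm_num
  simp only [hsq, and_or_left, filter_or]
  calc _ ≤ _ := card_union_le _ _
    _ ≤ _ := add_le_add_left (card_union_le _ _) _
    _ ≤ _ := by lia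

end BadPoints

section Count

variable {K : Type} [Field K] [Fintype K] [DecidableEq K]

theorem abs_card_pairs_sub_le {L : Type*} [Field L] [Algebra K L] [IsAlgClosed L]
    {f : MvPolynomial (Fin 3) K} (hplanes : ∀ c : K, c ^ 2 = 4 → ∃ v : Fin 3 → L,
      v 0 = algebraMap K L c ∧ MvPolynomial.aeval v f ≠ 0)
    (hsurface : ∃ v : Fin 3 → L, frickeForm v = 0 ∧ MvPolynomial.aeval v f ≠ 0) :
    |(#{g : SL2 K × SL2 K | MvPolynomial.eval (trPoint g.1 g.2) f = 0} : ℝ) -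
        #{v : Fin 3 → K | MvPolynomial.eval v f = 0} * (Fintype.card K : ℝ) ^ 3| ≤
      5 * (Fintype.card K : ℝ) ^ 2 * #{v : Fin 3 → K | MvPolynomial.eval v f = 0} +
        50 * f.totalDegree * (Fintype.card K : ℝ) ^ 4 := by
  have hcount : #{g : SL2 K × SL2 K | MvPolynomial.eval (trPoint g.1 g.2) f = 0} =
      ∑ v : Fin 3 → K with MvPolynomial.eval v f = 0, #(trPointFiber v) := by
    have h := sum_card_fiberwise_eq_card_filter univ
      {v : Fin 3 → K | MvPolynomial.eval v f = 0} fun g : SL2 K × SL2 K => trPoint g.1 g.2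
    simp only [mem_filter_univ] at h
    exact h.symm
  have hbad := card_bad_zeros_le hplanes hsurface
  rw [← filter_filter] at hbad
  set H : Finset (Fin 3 → K) := {v | MvPolynomial.eval v f = 0}
  set q := Fintype.card K
  have hbadSum : ∑ v ∈ H with v 0 ^ 2 = 4 ∨ frickeForm v = 0,
      |(#(trPointFiber v) : ℝ) - (q : ℝ) ^ 3| ≤ 10 * f.totalDegree * q * (5 * (q : ℝ) ^ 3) := by
    refine (sum_le_card_nsmul _ _ _ fun v _ => abs_card_trPointFiber_sub_le v).trans ?_
    rw [nsmul_eq_mul]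
    exact mul_le_mul_of_nonneg_right (mod_cast hbad) (by positivity)
  have hgoodSum : ∑ v ∈ H with ¬(v 0 ^ 2 = 4 ∨ frickeForm v = 0),
      |(#(trPointFiber v) : ℝ) - (q : ℝ) ^ 3| ≤ #H * (5 * (q : ℝ) ^ 2) := by
    refine (sum_le_card_nsmul _ _ (5 * (q : ℝ) ^ 2) fun v hv => ?_).trans ?_
    · obtain ⟨hs, hv⟩ := not_or.1 (mem_filter.1 hv).2
      exact abs_card_trPointFiber_sub_le_of_ne hs hv
    · rw [nsmul_eq_mul]
      exact mul_le_mul_of_nonneg_right (mod_cast card_filter_le _ _) (by positivity)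
  calc _ = |∑ v ∈ H, ((#(trPointFiber v) : ℝ) - (q : ℝ) ^ 3)| := by
        rw [hcount, Nat.cast_sum, sum_sub_distrib, sum_const, nsmul_eq_mul]
    _ ≤ ∑ v ∈ H, |(#(trPointFiber v) : ℝ) - (q : ℝ) ^ 3| := abs_sum_le_sum_abs _ _
    _ = _ := (sum_filter_add_sum_filter_not H _ _).symm
    _ ≤ _ := add_le_add hbadSum hgoodSum
    _ = _ := by ring

end Count

theorem exists_aeval_eq_zero_and_aeval_ne_zero {k L σ : Type*} [Field k] [Field L] [Algebra k L]
    [IsAlgClosed L] [Finite σ] {f g : MvPolynomial σ k} (hf : Irreducible f)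
    (hg : ∃ w : σ → L, MvPolynomial.aeval w g = 0)
    (hfg : ∃ v : σ → L, MvPolynomial.aeval v f = 0 ∧ MvPolynomial.aeval v g ≠ 0) :
    ∃ w : σ → L, MvPolynomial.aeval w g = 0 ∧ MvPolynomial.aeval w f ≠ 0 := by
  by_contra! hall
  obtain ⟨n, hn⟩ : ∃ n : ℕ, g ∣ f ^ n := by
    have hmem : f ∈ (Ideal.span {g}).radical := by
      rw [← MvPolynomial.vanishingIdeal_zeroLocus_eq_radical (K := L),
        MvPolynomial.mem_vanishingIdeal_iff]
      exact fun w hw => hall w (hw g (Ideal.mem_span_singleton_self g))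
    exact hmem.imp fun n hn => Ideal.mem_span_singleton.1 hn
  obtain ⟨i, -, hi⟩ := (dvd_prime_pow hf.prime n).1 hn
  rcases i with _ | i
  · obtain ⟨w, hw⟩ := hg
    rw [pow_zero, associated_one_iff_isUnit] at hi
    exact (hi.map (MvPolynomial.aeval w)).ne_zero hw
  · obtain ⟨v, hfv, hgv⟩ := hfg
    have hdvd := map_dvd (MvPolynomial.aeval v) ((dvd_pow_self f i.succ_ne_zero).trans hi.dvd')
    exact hgv (zero_dvd_iff.1 (hfv ▸ hdvd))

section Hypersurface

variable {K L : Type*} [Field K] [Field L] [Algebra K L] [IsAlgClosed L]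
  {f : MvPolynomial (Fin 3) K} {v : Fin 3 → L}

theorem exists_apply_zero_eq_and_aeval_ne_zero (hf : Irreducible (f.map (algebraMap K L)))
    (hfv : MvPolynomial.aeval v f = 0) {c : L} (hv : v 0 ≠ c) :
    ∃ w : Fin 3 → L, w 0 = c ∧ MvPolynomial.aeval w f ≠ 0 := by
  have heval (w : Fin 3 → L) :
      MvPolynomial.aeval w (MvPolynomial.X 0 - MvPolynomial.C c) = w 0 - c := by
    simp
  simpa only [heval, sub_eq_zero, MvPolynomial.aeval_map_algebraMap] using
    exists_aeval_eq_zero_and_aeval_ne_zero (L := L) hf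
      ⟨fun _ => c, (heval _).trans (sub_self c)⟩
      ⟨v, by rwa [MvPolynomial.aeval_map_algebraMap], by rwa [heval, sub_ne_zero]⟩

theorem exists_frickeForm_eq_zero_and_aeval_ne_zero
    (hf : Irreducible (f.map (algebraMap K L))) (hfv : MvPolynomial.aeval v f = 0)
    (hv : frickeForm v ≠ 0) :
    ∃ w : Fin 3 → L, frickeForm w = 0 ∧ MvPolynomial.aeval w f ≠ 0 := by
  have heval (w : Fin 3 → L) : MvPolynomial.aeval w
      (frickeForm MvPolynomial.X : MvPolynomial (Fin 3) L) = frickeForm w := by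
    simp [frickeForm]
  simpa only [heval, MvPolynomial.aeval_map_algebraMap] using
    exists_aeval_eq_zero_and_aeval_ne_zero (L := L) hf
      ⟨fun _ => 2, (heval _).trans (by norm_num [frickeForm])⟩
      ⟨v, by rwa [MvPolynomial.aeval_map_algebraMap], by rwa [heval]⟩

end Hypersurface

theorem fibre_count_over_irreducible_hypersurface_general (K : Type) [Field K] [Fintype K]
    (f : MvPolynomial (Fin 3) K) (hd : 1 ≤ f.totalDegree)
    (hplanes : ∀ c : K, c ^ 2 = 4 → ∃ v : Fin 3 → AlgebraicClosure K,
      v 0 = algebraMap K _ c ∧ MvPolynomial.aeval v f ≠ 0)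
    (hsurface : ∃ v : Fin 3 → AlgebraicClosure K, frickeForm v = 0 ∧ MvPolynomial.aeval v f ≠ 0)
    (hbig : Fintype.card K ^ 2 ≤ 2 * Nat.card {v : Fin 3 → K // MvPolynomial.eval v f = 0}) :
    ∃ r₂ : ℝ, |r₂| ≤ 105 * f.totalDegree / Fintype.card K ∧
      (Nat.card {g : SL2 K × SL2 K // MvPolynomial.eval (trPoint g.1 g.2) f = 0} : ℝ) =
        (Nat.card {v : Fin 3 → K // MvPolynomial.eval v f = 0} : ℝ) * (Fintype.card K : ℝ) ^ 3 *
          (1 + r₂) := by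
  classical
  have hcount := abs_card_pairs_sub_le hplanes hsurface
  simp only [Nat.card_eq_fintype_card, Fintype.card_subtype] at hbig ⊢
  have hq : (0 : ℝ) < Fintype.card K := mod_cast Fintype.card_pos
  have hbig' : (Fintype.card K : ℝ) ^ 2 ≤ 2 * #{v : Fin 3 → K | MvPolynomial.eval v f = 0} :=
    mod_cast hbig
  have hH : (0 : ℝ) < #{v : Fin 3 → K | MvPolynomial.eval v f = 0} := by
    linarith [pow_pos hq 2]
  have hd' : (1 : ℝ) ≤ f.totalDegree := mod_cast hd
  refine exists_eq_mul_one_add_of_abs_sub_le (mul_pos hH (pow_pos hq 3)) (hcount.trans ?_)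
  generalize (Fintype.card K : ℝ) = q at *
  generalize (#{v : Fin 3 → K | MvPolynomial.eval v f = 0} : ℝ) = h at *
  generalize (f.totalDegree : ℝ) = d at *
  calc 5 * q ^ 2 * h + 50 * d * q ^ 4 = 5 * q ^ 2 * h * 1 + 50 * d * q ^ 2 * q ^ 2 := by ring
    _ ≤ 5 * q ^ 2 * h * d + 50 * d * q ^ 2 * (2 * h) := by gcongr
    _ = 105 * d / q * (h * q ^ 3) := by field_simp; ring

theorem fibre_count_over_irreducible_hypersurface (K : Type) [Field K] [Fintype K]
    (q : ℕ) (hq : Fintype.card K = q)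
    (f : MvPolynomial (Fin 3) K) (d : ℕ) (hd : f.totalDegree = d) (hd1 : 1 ≤ d)
    (hirr : Irreducible (MvPolynomial.map (algebraMap K (AlgebraicClosure K)) f))
    (hHD : ∃ v : Fin 3 → AlgebraicClosure K,
      MvPolynomial.eval v (MvPolynomial.map (algebraMap K (AlgebraicClosure K)) f) = 0 ∧
      ((v 2) ^ 2 - 4) * ((v 0) ^ 2 - 4) *
        ((v 0) ^ 2 + (v 2) ^ 2 + (v 1) ^ 2 - v 0 * v 1 * v 2 - 4) ≠ 0)
    (hbig : q ^ 2 ≤ 2 * Nat.card {v : Fin 3 → K // MvPolynomial.eval v f = 0}) :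
    ∃ r₂ : ℝ, |r₂| ≤ 157 * d / q ∧
      (Nat.card {g : SL2 K × SL2 K // MvPolynomial.eval (trPoint g.1 g.2) f = 0} : ℝ) =
        (Nat.card {v : Fin 3 → K // MvPolynomial.eval v f = 0} : ℝ) * (q : ℝ) ^ 3 * (1 + r₂) := by
  subst hq hd
  obtain ⟨v, hfv, hΔ⟩ := hHD
  rw [MvPolynomial.eval_map, ← MvPolynomial.aeval_def] at hfv
  obtain ⟨hplane, hsurface⟩ := mul_ne_zero_iff.1 hΔ
  have hv0 (c : K) (hc : c ^ 2 = 4) : v 0 ≠ algebraMap K _ c := fun hvc =>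
    right_ne_zero_of_mul hplane (by rw [hvc, ← map_pow, hc, map_ofNat, sub_self])
  obtain ⟨r₂, hr₂, hN⟩ := fibre_count_over_irreducible_hypersurface_general K f hd1
    (fun c hc => exists_apply_zero_eq_and_aeval_ne_zero hirr hfv (hv0 c hc))
    (exists_frickeForm_eq_zero_and_aeval_ne_zero hirr hfv hsurface) hbig
  exact ⟨r₂, hr₂.trans (by gcongr; norm_num), hN⟩
end

section
/- Let w = x^{a_1}y^{b_1}···x^{a_r}y^{b_r} be a reduced word of complexity r with A ≠ 0 or B ≠ 0, and let F = ℚ or F = F_p for a prime p. Suppose that over F the trace polynomial decomposes as f_w = h ∘ Q, where Q ∈ F[s,u,t] has deg Q ≥ 1 and h ∈ F[z] has d := deg h ≥ 2. Then d divides both A and B, and over the algebraic closure of F one has h(z) = D_d(ℓ(z)) for some polynomial ℓ of degree one. -/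
open Matrix Polynomial

/-!
The trace of `g ^ n`, for `g` of determinant one, is the Dickson polynomial `D_|n|` evaluated at the
trace of `g`. Evaluating the trace polynomial at the commuting pair `(g ^ m, g ^ n)`, where `g` has
indeterminate trace, therefore turns a decomposition `f_w = h ∘ Q` into `h ∘ q = D_N` with
`N = |mA + nB|`. Degrees give `d ∣ N`, and it remains to show that `q` is `D_e`, `e = deg q`, up to
an affine change of variable; cancelling `q` on the right in `h ∘ q = D_d ∘ D_e` then yields `h`.

If `N` is invertible in the field, compare with `D_d ∘ D_e`: in a tame decomposition the right
factor is determined by its degree up to an affine change. If the characteristic `p` divides `N`,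
then `D_N = D_{N/p} ∘ X ^ p`, so `h' = 0` or `q' = 0`. Peeling `X ^ p` off the factor concerned
leaves a decomposition of `D_{N/p}`, whose right factor is `q` stripped of `X ^ p` or the Frobenius
twist of `q`. In the latter case the affine relation descends along Frobenius by comparing leading
coefficients.
-/

theorem coeff_geomSum₂ {R : Type*} [CommSemiring R] {p q : R[X]} {n : ℕ} {c : R}
    (hp : p.natDegree ≤ n) (hq : q.natDegree ≤ n) (hpc : p.coeff n = c) (hqc : q.coeff n = c)
    (d : ℕ) :
    (∑ i ∈ Finset.range d, p ^ i * q ^ (d - 1 - i)).coeff ((d - 1) * n) = d * c ^ (d - 1) := by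
  have term_coeff : ∀ i ∈ Finset.range d,
      (p ^ i * q ^ (d - 1 - i)).coeff ((d - 1) * n) = c ^ (d - 1) := by
    intro i hi
    have hsplit : i + (d - 1 - i) = d - 1 := by have := Finset.mem_range.1 hi; omega
    rw [← hsplit, Nat.add_sub_cancel_left, add_mul,
      coeff_mul_add_eq_of_natDegree_le (natDegree_pow_le_of_le i hp) (natDegree_pow_le_of_le _ hq),
      coeff_pow_of_natDegree_le hp, coeff_pow_of_natDegree_le hq, hpc, hqc, ← pow_add]
  rw [finsetSum_coeff, Finset.sum_congr rfl term_coeff, Finset.sum_const, Finset.card_range,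
    nsmul_eq_mul]

theorem natDegree_sub_eq_zero_of_natDegree_pow_sub_pow_le {R : Type*} [CommRing R] [IsDomain R]
    {p q : R[X]} {d : ℕ} (hp : p ≠ 0) (hdeg : p.natDegree = q.natDegree)
    (hlead : p.leadingCoeff = q.leadingCoeff) (hd : (d : R) ≠ 0)
    (hpow : (p ^ d - q ^ d).natDegree ≤ (d - 1) * p.natDegree) : (p - q).natDegree = 0 := by
  set S : R[X] := ∑ i ∈ Finset.range d, p ^ i * q ^ (d - 1 - i) with hS
  have hScoeff : S.coeff ((d - 1) * p.natDegree) ≠ 0 := by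
    rw [hS, coeff_geomSum₂ (c := p.leadingCoeff) le_rfl hdeg.ge rfl
      (by rw [hlead, hdeg, coeff_natDegree])]
    exact mul_ne_zero hd (pow_ne_zero _ (leadingCoeff_ne_zero.2 hp))
  have hSne : S ≠ 0 := by
    rintro h0
    simp [h0] at hScoeff
  have hfactor : S * (p - q) = p ^ d - q ^ d := (Commute.all p q).geom_sum₂_mul d
  by_cases hpq : p - q = 0
  · rw [hpq, natDegree_zero]
  · rw [← hfactor, natDegree_mul hSne hpq] at hpow
    have := le_natDegree_of_ne_zero hScoeff
    omega

theorem natDegree_comp_sub_leadingCoeff_mul_pow_le {R : Type*} [CommRing R] (h q : R[X]) :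
    (h.comp q - C h.leadingCoeff * q ^ h.natDegree).natDegree ≤
      (h.natDegree - 1) * q.natDegree := by
  have herase : h.comp q - C h.leadingCoeff * q ^ h.natDegree = h.eraseLead.comp q := by
    rw [← self_sub_C_mul_X_pow, sub_comp, mul_comp, C_comp, X_pow_comp]
  rw [herase]
  exact natDegree_comp_le.trans (Nat.mul_le_mul_right _ h.eraseLead_natDegree_le)

theorem natDegree_pow_sub_pow_le_of_comp_eq_comp {R : Type*} [CommRing R] [IsDomain R]
    {h g q r : R[X]} {a : R} (hh : h ≠ 0) (hdeg : h.natDegree = g.natDegree)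
    (hqr : q.natDegree = r.natDegree)
    (hlead : g.leadingCoeff = h.leadingCoeff * a ^ h.natDegree) (hcomp : h.comp q = g.comp r) :
    (q ^ h.natDegree - (C a * r) ^ h.natDegree).natDegree ≤ (h.natDegree - 1) * q.natDegree := by
  have hdiff : C h.leadingCoeff * (q ^ h.natDegree - (C a * r) ^ h.natDegree) =
      (g.comp r - C g.leadingCoeff * r ^ g.natDegree) -
        (h.comp q - C h.leadingCoeff * q ^ h.natDegree) := by
    rw [hcomp, hlead, ← hdeg, C_mul, C_pow]
    ring
  rw [← natDegree_C_mul (leadingCoeff_ne_zero.2 hh), hdiff]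
  refine (natDegree_sub_le_of_le ?_
    (natDegree_comp_sub_leadingCoeff_mul_pow_le h q)).trans (max_self _).le
  simpa only [hdeg, hqr] using natDegree_comp_sub_leadingCoeff_mul_pow_le g r

/-- `q` and `g` agree up to an affine change of variable on the left: `q = ℓ ∘ g` with
`ℓ = aX + b`, `a ≠ 0`. This is the freedom there always is in the right factor of a decomposition
`h ∘ q`. -/
def AffinelyEquivalent {K : Type*} [Field K] (q g : K[X]) : Prop :=
  ∃ a b : K, a ≠ 0 ∧ q = C a * g + C b

namespace AffinelyEquivalent

variable {K : Type*} [Field K]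

theorem of_comp_eq_comp {h g q r : K[X]} (hdeg : h.natDegree = g.natDegree)
    (htame : (h.natDegree : K) ≠ 0) (hq : q.natDegree ≠ 0) (hcomp : h.comp q = g.comp r) :
    AffinelyEquivalent q r := by
  have hd : h.natDegree ≠ 0 := by
    rintro h0
    simp [h0] at htame
  have hqr : q.natDegree = r.natDegree := by
    have := congrArg natDegree hcomp
    rw [natDegree_comp, natDegree_comp, ← hdeg] at this
    exact Nat.eq_of_mul_eq_mul_left (Nat.pos_of_ne_zero hd) this
  have hlead : h.leadingCoeff * q.leadingCoeff ^ h.natDegree =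
      g.leadingCoeff * r.leadingCoeff ^ h.natDegree := by
    have := congrArg leadingCoeff hcomp
    rwa [leadingCoeff_comp hq, leadingCoeff_comp (hqr ▸ hq), ← hdeg] at this
  have hh0 : h ≠ 0 := ne_zero_of_natDegree_gt hd.bot_lt
  have hq0 : q ≠ 0 := ne_zero_of_natDegree_gt hq.bot_lt
  have hr0 : r.leadingCoeff ≠ 0 :=
    leadingCoeff_ne_zero.2 (ne_zero_of_natDegree_gt (hqr ▸ hq.bot_lt))
  set a := q.leadingCoeff / r.leadingCoeff with ha
  have ha0 : a ≠ 0 := div_ne_zero (leadingCoeff_ne_zero.2 hq0) hr0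
  have hga : g.leadingCoeff = h.leadingCoeff * a ^ h.natDegree := by
    rw [ha, div_pow, ← mul_div_assoc, hlead, mul_div_cancel_right₀ _ (pow_ne_zero _ hr0)]
  have hconst : (q - C a * r).natDegree = 0 :=
    natDegree_sub_eq_zero_of_natDegree_pow_sub_pow_le hq0
      (by rw [natDegree_C_mul ha0, hqr])
      (by rw [leadingCoeff_mul, leadingCoeff_C, ha, div_mul_cancel₀ _ hr0]) htame
      (natDegree_pow_sub_pow_le_of_comp_eq_comp hh0 hdeg hqr hga hcomp)
  exact ⟨a, _, ha0, sub_eq_iff_eq_add'.1 (eq_C_of_natDegree_eq_zero hconst)⟩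

theorem of_map {L : Type*} [Field L] (φ : K →+* L) {q g : K[X]} (hg : g.natDegree ≠ 0)
    (hmap : AffinelyEquivalent (q.map φ) (g.map φ)) : AffinelyEquivalent q g := by
  obtain ⟨α, β, hα, hqg⟩ := hmap
  have hg0 : g.leadingCoeff ≠ 0 := leadingCoeff_ne_zero.2 (ne_zero_of_natDegree_gt hg.bot_lt)
  have hgdeg : 0 < (C α * g.map φ).degree := by
    rw [degree_C_mul hα, degree_map]
    exact natDegree_pos_iff_degree_pos.1 hg.bot_lt
  have hlead : φ q.leadingCoeff = α * φ g.leadingCoeff := by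
    have := congrArg leadingCoeff hqg
    rwa [leadingCoeff_add_of_degree_lt' (degree_C_le.trans_lt hgdeg), leadingCoeff_mul,
      leadingCoeff_C, leadingCoeff_map, leadingCoeff_map] at this
  set a := q.leadingCoeff / g.leadingCoeff with ha
  have hφa : φ a = α := by
    rw [ha, map_div₀, hlead, mul_div_cancel_right₀ _ ((map_ne_zero φ).2 hg0)]
  have hconst : (q - C a * g).natDegree = 0 := by
    rw [← natDegree_map φ, Polynomial.map_sub, Polynomial.map_mul, map_C, hφa, hqg,
      add_sub_cancel_left, natDegree_C]
  exact ⟨a, _, (map_ne_zero φ).1 (hφa ▸ hα),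
    sub_eq_iff_eq_add'.1 (eq_C_of_natDegree_eq_zero hconst)⟩

theorem expand {q g : K[X]} (hqg : AffinelyEquivalent q g) (p : ℕ) :
    AffinelyEquivalent (Polynomial.expand K p q) (Polynomial.expand K p g) := by
  obtain ⟨a, b, ha, rfl⟩ := hqg
  exact ⟨a, b, ha, by rw [map_add, map_mul, expand_C, expand_C]⟩

end AffinelyEquivalent

section WildDecomposition

variable {R : Type*} [CommRing R] (p : ℕ)

theorem comp_expand (h q : R[X]) : h.comp (expand R p q) = expand R p (h.comp q) := by
  rw [expand_eq_comp_X_pow, expand_eq_comp_X_pow, comp_assoc]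

theorem expand_comp_eq_expand_comp_map_frobenius [ExpChar R p] (h q : R[X]) :
    (expand R p h).comp q = expand R p (h.comp (q.map (frobenius R p))) := by
  rw [expand_eq_comp_X_pow, comp_assoc, X_pow_comp, ← map_frobenius_expand, map_expand, comp_expand]

theorem exists_factor_eq_expand_of_comp_eq_expand [IsDomain R] [Fact p.Prime] [CharP R p]
    {h q g : R[X]} (hq : q.natDegree ≠ 0) (hcomp : h.comp q = expand R p g) :
    (∃ q₁, q = expand R p q₁ ∧ h.comp q₁ = g) ∨
      ∃ h₁, h = expand R p h₁ ∧ h₁.comp (q.map (frobenius R p)) = g := by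
  have hp : p ≠ 0 := (Fact.out : p.Prime).ne_zero
  have hderiv : derivative q * (derivative h).comp q = 0 := by
    rw [← derivative_comp, hcomp, derivative_expand, CharP.cast_eq_zero, zero_mul, mul_zero]
  rcases mul_eq_zero.1 hderiv with hq' | hh'
  · have hq₁ := expand_contract p hq' hp
    refine .inl ⟨contract p q, hq₁.symm, expand_injective hp.bot_lt ?_⟩
    rw [← comp_expand, hq₁, hcomp]
  · have hh'0 : derivative h = 0 := by
      refine (comp_eq_zero_iff.1 hh').resolve_right fun hconst => hq ?_
      rw [hconst.2, natDegree_C]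
    have hh₁ := expand_contract p hh'0 hp
    refine .inr ⟨contract p h, hh₁.symm, expand_injective hp.bot_lt ?_⟩
    rw [← expand_comp_eq_expand_comp_map_frobenius, hh₁, hcomp]

end WildDecomposition

section DicksonDecomposition

theorem natDegree_dickson_one_one {R : Type*} [CommRing R] [Nontrivial R] (n : ℕ) :
    (dickson 1 (1 : R) n).natDegree = n := by
  induction n using Nat.twoStepInduction with
  | zero => rw [dickson_one_one_eq_chebyshev_C, Nat.cast_zero, Chebyshev.C_zero, natDegree_ofNat]
  | one => rw [dickson_one, natDegree_X]
  | more n ih₀ ih₁ =>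
    have hX : (X * dickson 1 (1 : R) (n + 1)).natDegree = n + 2 := by
      rw [natDegree_X_mul (ne_zero_of_natDegree_gt (n.succ_pos.trans_eq ih₁.symm)), ih₁]
    rw [dickson_add_two, map_one, one_mul,
      natDegree_sub_eq_left_of_natDegree_lt (by rw [ih₀, hX]; omega), hX]

theorem dickson_one_one_prime_mul {R : Type*} [CommRing R] (p : ℕ) [Fact p.Prime] [CharP R p]
    (n : ℕ) : dickson 1 (1 : R) (p * n) = expand R p (dickson 1 1 n) := by
  rw [mul_comm, dickson_one_one_mul, dickson_one_one_charP R p, expand_eq_comp_X_pow]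

theorem natDegree_mul_natDegree_of_comp_eq_dickson {R : Type*} [CommRing R] [IsDomain R]
    {h q : R[X]} {n : ℕ} (hcomp : h.comp q = dickson 1 1 n) : h.natDegree * q.natDegree = n := by
  rw [← natDegree_comp, hcomp, natDegree_dickson_one_one]

variable {K : Type*} [Field K]

theorem affinelyEquivalent_dickson_of_comp_eq_dickson {h q : K[X]} {n : ℕ} (hn : n ≠ 0)
    (hcomp : h.comp q = dickson 1 1 n) : AffinelyEquivalent q (dickson 1 1 q.natDegree) := by
  induction n using Nat.strong_induction_on generalizing h q with
  | _ n ih =>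
  have hdeg := natDegree_mul_natDegree_of_comp_eq_dickson hcomp
  have hq : q.natDegree ≠ 0 := right_ne_zero_of_mul (hdeg ▸ hn)
  by_cases hnK : (n : K) = 0
  · obtain ⟨p, _⟩ := CharP.exists K
    obtain ⟨k, rfl⟩ := (CharP.cast_eq_zero_iff K p n).1 hnK
    have : Fact p.Prime :=
      ⟨(CharP.char_is_prime_or_zero K p).resolve_right (left_ne_zero_of_mul hn)⟩
    have hk : k ≠ 0 := right_ne_zero_of_mul hn
    have hlt : k < p * k := lt_mul_left hk.bot_lt (Fact.out : p.Prime).one_lt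
    rw [dickson_one_one_prime_mul] at hcomp
    rcases exists_factor_eq_expand_of_comp_eq_expand p hq hcomp with
      ⟨q₁, rfl, hcomp₁⟩ | ⟨h₁, -, hcomp₁⟩
    · rw [natDegree_expand, mul_comm, dickson_one_one_prime_mul]
      exact (ih k hlt hk hcomp₁).expand p
    · have hmap := ih k hlt hk hcomp₁
      rw [natDegree_map, ← map_one (frobenius K p), ← map_dickson] at hmap
      exact .of_map (frobenius K p) (by rwa [natDegree_dickson_one_one]) hmap
  · refine .of_comp_eq_comp (natDegree_dickson_one_one _).symm ?_ hq
      (hcomp.trans (by rw [← hdeg, dickson_one_one_mul]))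
    rw [← hdeg, Nat.cast_mul] at hnK
    exact left_ne_zero_of_mul hnK

theorem exists_eq_dickson_comp_of_comp_eq_dickson {h q : K[X]} {n : ℕ} (hn : n ≠ 0)
    (hcomp : h.comp q = dickson 1 1 n) :
    ∃ ℓ : K[X], ℓ.degree = 1 ∧ h = (dickson 1 1 h.natDegree).comp ℓ := by
  obtain ⟨a, b, ha, hqab⟩ := affinelyEquivalent_dickson_of_comp_eq_dickson hn hcomp
  have hdeg := natDegree_mul_natDegree_of_comp_eq_dickson hcomp
  have hq : q.natDegree ≠ 0 := right_ne_zero_of_mul (hdeg ▸ hn)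
  set ℓ : K[X] := C a⁻¹ * X + C (-(a⁻¹ * b)) with hℓ
  have hℓq : ℓ.comp q = dickson 1 1 q.natDegree := by
    rw [hℓ, add_comp, mul_comp, C_comp, X_comp, C_comp]
    nth_rw 1 [hqab]
    rw [mul_add, ← mul_assoc, ← C_mul, ← C_mul, inv_mul_cancel₀ ha, C_1, one_mul, C_neg,
      add_neg_cancel_right]
  refine ⟨ℓ, degree_linear (inv_ne_zero ha), sub_eq_zero.1 ?_⟩
  have hcancel : (h - (dickson 1 1 h.natDegree).comp ℓ).comp q = 0 := by
    rw [sub_comp, comp_assoc, hℓq, hcomp, ← dickson_one_one_mul, hdeg, sub_self]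
  refine (comp_eq_zero_iff.1 hcancel).resolve_right fun hconst => hq ?_
  rw [hconst.2, natDegree_C]

end DicksonDecomposition

theorem wordEval_wordOf_of_commute {G : Type*} [Group G] {x y : G} (hxy : Commute x y) {r : ℕ}
    (a b : Fin r → ℤ) : wordEval (wordOf a b) x y = x ^ (∑ i, a i) * y ^ (∑ i, b i) := by
  induction r with
  | zero => simp [wordEval, wordOf]
  | succ r ih =>
    have hhead : wordEval (wordOf a b) x y =
        x ^ a 0 * y ^ b 0 * wordEval (wordOf (fun i => a i.succ) fun i => b i.succ) x y := by
      simp [wordEval, wordOf]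
    rw [hhead, ih, Fin.sum_univ_succ, Fin.sum_univ_succ, _root_.zpow_add, _root_.zpow_add,
      (hxy.zpow_zpow _ _).symm.mul_mul_mul_comm]

theorem trace_coe_pow_eq_eval_dickson {R : Type*} [CommRing R]
    (g : Matrix.SpecialLinearGroup (Fin 2) R) (n : ℕ) :
    ((g ^ n : Matrix.SpecialLinearGroup (Fin 2) R) : Matrix (Fin 2) (Fin 2) R).trace =
      (dickson 1 (1 : R) n).eval (g : Matrix (Fin 2) (Fin 2) R).trace := by
  induction n using Nat.twoStepInduction with
  | zero =>
    rw [dickson_one_one_eq_chebyshev_C, Nat.cast_zero, Chebyshev.C_zero, eval_ofNat]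
    simp
  | one => simp
  | more n ih₀ ih₁ =>
    have hdet := g.det_coe
    rw [Matrix.det_fin_two] at hdet
    rw [dickson_add_two, map_one, one_mul, eval_sub, eval_mul, eval_X, ← ih₀, ← ih₁, pow_succ,
      pow_succ]
    generalize g ^ n = x
    simp only [Matrix.SpecialLinearGroup.coe_mul, Matrix.trace_fin_two, Matrix.mul_apply,
      Fin.sum_univ_two]
    linear_combination (-(x 0 0) - x 1 1) * hdet

theorem trace_coe_zpow_eq_eval_dickson {R : Type*} [CommRing R]
    (g : Matrix.SpecialLinearGroup (Fin 2) R) (n : ℤ) :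
    ((g ^ n : Matrix.SpecialLinearGroup (Fin 2) R) : Matrix (Fin 2) (Fin 2) R).trace =
      (dickson 1 (1 : R) n.natAbs).eval (g : Matrix (Fin 2) (Fin 2) R).trace := by
  have trace_inv (x : Matrix.SpecialLinearGroup (Fin 2) R) :
      (↑x⁻¹ : Matrix (Fin 2) (Fin 2) R).trace = (x : Matrix (Fin 2) (Fin 2) R).trace := by
    rw [Matrix.SpecialLinearGroup.coe_inv, Matrix.adjugate_fin_two, Matrix.trace_fin_two_of,
      Matrix.trace_fin_two, add_comm]
  rw [← trace_coe_pow_eq_eval_dickson]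
  rcases Int.natAbs_eq n with hn | hn
  · conv_lhs => rw [hn, zpow_natCast]
  · conv_lhs => rw [hn, _root_.zpow_neg, zpow_natCast, trace_inv]

theorem IsTracePolynomial.eval_trPoint_zpow {r : ℕ} {a b : Fin r → ℤ}
    {f : MvPolynomial (Fin 3) ℤ} (hf : IsTracePolynomial (wordOf a b) f) {R : Type} [CommRing R]
    (g : SL2 R) (m n : ℤ) :
    MvPolynomial.eval (trPoint (g ^ m) (g ^ n)) (MvPolynomial.map (Int.castRingHom R) f) =
      (dickson 1 (1 : R) (m * ∑ i, a i + n * ∑ i, b i).natAbs).eval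
        (g : Matrix (Fin 2) (Fin 2) R).trace := by
  rw [← hf, wordEval_wordOf_of_commute (Commute.zpow_zpow_self g m n), ← _root_.zpow_mul,
    ← _root_.zpow_mul, ← _root_.zpow_add, trace_coe_zpow_eq_eval_dickson]

theorem exists_specialLinearGroup_trace_eq {R : Type*} [CommRing R] (t : R) :
    ∃ g : Matrix.SpecialLinearGroup (Fin 2) R, (g : Matrix (Fin 2) (Fin 2) R).trace = t :=
  ⟨⟨!![t, -1; 1, 0], by simp [Matrix.det_fin_two_of]⟩, by simp [Matrix.trace_fin_two_of]⟩

theorem IsTracePolynomial.exists_comp_eq_dickson {r : ℕ} {a b : Fin r → ℤ}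
    {f : MvPolynomial (Fin 3) ℤ} (hf : IsTracePolynomial (wordOf a b) f) {R : Type} [CommRing R]
    {Q : MvPolynomial (Fin 3) R} {h : R[X]}
    (hdec : MvPolynomial.map (Int.castRingHom R) f = aeval Q h) (m n : ℤ) :
    ∃ q : R[X], h.comp q = dickson 1 1 (m * ∑ i, a i + n * ∑ i, b i).natAbs := by
  obtain ⟨g, hg⟩ := exists_specialLinearGroup_trace_eq (X : R[X])
  set v : Fin 3 → R[X] := trPoint (g ^ m) (g ^ n) with hv
  have hext : (MvPolynomial.map (Int.castRingHom R[X])) f =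
      MvPolynomial.map C (MvPolynomial.map (Int.castRingHom R) f) := by
    rw [MvPolynomial.map_map]
    exact congrArg (MvPolynomial.map · f) (RingHom.ext_int _ _)
  refine ⟨MvPolynomial.aeval v Q, ?_⟩
  calc h.comp (MvPolynomial.aeval v Q)
      = MvPolynomial.aeval v (aeval Q h) := by
        rw [← aeval_algHom_apply]; rfl
    _ = MvPolynomial.eval v (MvPolynomial.map (Int.castRingHom R[X]) f) := by
        rw [hext, ← hdec, MvPolynomial.eval_map]; rfl
    _ = (dickson 1 (1 : R[X]) (m * ∑ i, a i + n * ∑ i, b i).natAbs).eval X := by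
        rw [hv, hf.eval_trPoint_zpow, hg]
    _ = dickson 1 1 (m * ∑ i, a i + n * ∑ i, b i).natAbs := by
        rw [← C_1, ← map_dickson, eval_map, eval₂_C_X]

theorem dickson_head_of_composite_trace_polynomial_general {r : ℕ} (a b : Fin r → ℤ) (A B : ℤ)
    (hA : A = ∑ i, a i) (hB : B = ∑ i, b i) (hAB : A ≠ 0 ∨ B ≠ 0)
    (f : MvPolynomial (Fin 3) ℤ) (hf : IsTracePolynomial (wordOf a b) f)
    (F : Type) [Field F] (Q : MvPolynomial (Fin 3) F) (h : F[X]) (d : ℕ) (hd : h.natDegree = d)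
    (hdec : MvPolynomial.map (Int.castRingHom F) f = aeval Q h) :
    (d : ℤ) ∣ A ∧ (d : ℤ) ∣ B ∧ ∃ ℓ : F[X], ℓ.degree = 1 ∧ h = (dickson 1 1 d).comp ℓ := by
  have hcomp (m n : ℤ) : ∃ q : F[X], h.comp q = dickson 1 1 (m * A + n * B).natAbs :=
    hA ▸ hB ▸ hf.exists_comp_eq_dickson hdec m n
  have hdvd (m n : ℤ) : (d : ℤ) ∣ m * A + n * B := by
    obtain ⟨q, hq⟩ := hcomp m n
    exact Int.natCast_dvd.2 ⟨_, hd ▸ (natDegree_mul_natDegree_of_comp_eq_dickson hq).symm⟩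
  have hpos : A * A + B * B ≠ 0 := fun h0 => not_and_or.2 hAB (mul_self_add_mul_self_eq_zero.1 h0)
  obtain ⟨q, hq⟩ := hcomp A B
  refine ⟨by simpa using hdvd 1 0, by simpa using hdvd 0 1, ?_⟩
  exact hd ▸ exists_eq_dickson_comp_of_comp_eq_dickson (Int.natAbs_ne_zero.2 hpos) hq

theorem dickson_head_of_composite_trace_polynomial {r : ℕ}
    (a b : Fin r → ℤ) (hab : ∀ i, a i ≠ 0 ∧ b i ≠ 0)
    (A B : ℤ) (hA : A = ∑ i, a i) (hB : B = ∑ i, b i) (hAB : A ≠ 0 ∨ B ≠ 0)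
    (f : MvPolynomial (Fin 3) ℤ) (hf : IsTracePolynomial (wordOf a b) f)
    (F : Type) [Field F]
    (hF : Nonempty (F ≃+* ℚ) ∨ ∃ p : ℕ, p.Prime ∧ Nonempty (F ≃+* ZMod p))
    (Q : MvPolynomial (Fin 3) F) (h : Polynomial F) (d : ℕ)
    (hQ : 1 ≤ Q.totalDegree) (hd : h.natDegree = d) (hd2 : 2 ≤ d)
    (hdec : MvPolynomial.map (Int.castRingHom F) f = Polynomial.aeval Q h) :
    (d : ℤ) ∣ A ∧ (d : ℤ) ∣ B ∧
      ∃ ℓ : Polynomial (AlgebraicClosure F), ℓ.degree = 1 ∧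
        h.map (algebraMap F (AlgebraicClosure F)) =
          (Polynomial.dickson 1 (1 : AlgebraicClosure F) d).comp ℓ := by
  obtain ⟨hdA, hdB, ℓ, hℓ, rfl⟩ := dickson_head_of_composite_trace_polynomial_general
    a b A B hA hB hAB f hf F Q h d hd hdec
  exact ⟨hdA, hdB, ℓ.map (algebraMap F _), by rw [degree_map, hℓ],
    by rw [Polynomial.map_comp, map_dickson, map_one]⟩
end

section
/- Let w = x^{a_1}y^{b_1}···x^{a_r}y^{b_r} be a reduced word of complexity r, and let F = ℚ, or F = F_p for a prime p with p > max_i max(|a_i|, |b_i|). Suppose that over F the trace polynomial decomposes as f_w = h ∘ q, where h is a univariate polynomial over F of degree n and q ∈ F[s,u,t]; let m be the degree of q in the variable u. Then r = nm, and there exists a reduced word v of complexity m such that w is trace-similar to v^n. -/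
open Matrix Polynomial

/-!
For `M ∈ SL₂` one has `M ^ a = S_{a-1}(tr M) M - S_{a-2}(tr M)`, where `S` is the rescaled
Chebyshev polynomial of the second kind. Fix an upper triangular `x` and let `y` run through a line
of lower triangular matrices parametrized by `u = tr xy`. Then each `x ^ a y ^ b` is affine in `u`,
and its linear coefficient has zero second column and upper left entry
`S_{a-1}(tr x) S_{b-1}(tr y)`. Hence `f_w` has degree `r` in `u`, with leading coefficient
`∏ S_{a_i-1}(s) · ∏ S_{b_i-1}(t)`.

If `f_w = h ∘ q` with `deg h = n`, then `r = n · deg_u q` and this leading coefficient is a constant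
times an `n`-th power. Since `S_{b-1}(2) = b`, setting `t = 2` shows that `∏ S_{a_i-1}` itself is a
constant times an `n`-th power. Each `S_{a-1}` is separable, and if `ζ` is a primitive `2k`-th root
of unity with `k ≥ 2`, then `ζ + ζ⁻¹` is a root of it exactly when `k ∣ a`. Comparing multiplicities
at `ζ + ζ⁻¹`, `n` divides `#{i | k ∣ a_i}` for every `k`; by downward induction on `k`, it divides
`#{i | |a_i| = k}`. The exponents `b_i` are treated symmetrically.
-/

section Chebyshev

variable {R : Type*} [CommRing R]

lemma derivative_chebyshevC (n : ℤ) :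
    derivative (Chebyshev.C R n) = n * Chebyshev.S R (n - 1) := by
  induction n using Chebyshev.induct with
  | zero => simp
  | one => simp
  | add_two n ih₁ ih₀ =>
    rw [Chebyshev.C_add_two, derivative_sub, derivative_mul, derivative_X, ih₁, ih₀]
    have hS := Chebyshev.S_sub_one R n
    have hC := Chebyshev.S_eq_X_mul_S_add_C R n
    rw [add_sub_cancel_right, show (n : ℤ) + 2 - 1 = n + 1 by ring]
    push_cast
    linear_combination -hC - (n : R[X]) * hS
  | neg_add_one n ih₀ ih₁ =>
    rw [Chebyshev.C_sub_one, derivative_sub, derivative_mul, derivative_X, ih₁, ih₀]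
    have hS := Chebyshev.S_sub_two R (-n)
    have hC := Chebyshev.C_eq_S_sub_X_mul_S R (-n)
    rw [add_sub_cancel_right, show -(n : ℤ) - 1 - 1 = -n - 2 by ring]
    push_cast
    linear_combination hC + ((n : R[X]) + 1) * hS

lemma chebyshevC_sq_sub (n : ℤ) :
    Chebyshev.C R n ^ 2 - (X ^ 2 - 4) * Chebyshev.S R (n - 1) ^ 2 = 4 := by
  have hS := Chebyshev.S_sq_add_S_sq R (n - 1)
  rw [sub_add_cancel] at hS
  rw [Chebyshev.C_eq_S_sub_X_mul_S]
  linear_combination 4 * hS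

lemma X_sq_sub_four_mul_chebyshevS (n : ℤ) :
    (X ^ 2 - 4) * Chebyshev.S R (n - 1) = 2 * Chebyshev.C R (n + 1) - X * Chebyshev.C R n := by
  rw [Chebyshev.C_eq_S_sub_X_mul_S, Chebyshev.C_eq_S_sub_X_mul_S, add_sub_cancel_right,
    Chebyshev.S_add_one]
  ring

lemma X_sq_sub_four_mul_derivative_chebyshevS (n : ℤ) :
    (X ^ 2 - 4) * derivative (Chebyshev.S R (n - 1)) =
      (n : R[X]) * Chebyshev.C R n - X * Chebyshev.S R (n - 1) := by
  have h := congrArg derivative (X_sq_sub_four_mul_chebyshevS (R := R) n)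
  simp only [derivative_mul, derivative_sub, derivative_X_pow, derivative_X, derivative_ofNat,
    derivative_chebyshevC, add_sub_cancel_right, Nat.cast_ofNat, Polynomial.C_ofNat] at h
  push_cast at h
  linear_combination h - (n + 1 : R[X]) * Chebyshev.C_eq_S_sub_X_mul_S R n

lemma separable_chebyshevS {n : ℤ} (hn : IsUnit (2 * n : R)) :
    (Chebyshev.S R (n - 1)).Separable := by
  -- Eliminating `C_n` from the Pell equation `hpell` by means of `hder` gives a Bézout relation.
  obtain ⟨v, hv⟩ := isUnit_iff_exists_inv.mp hn
  set S := Chebyshev.S R (n - 1)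
  have hpell := chebyshevC_sq_sub (R := R) n
  have hder := X_sq_sub_four_mul_derivative_chebyshevS (R := R) n
  have hunit : (2 * n : R[X]) * C v = 1 := by
    simpa only [map_mul, map_intCast, map_ofNat, map_one] using congrArg C hv
  refine ⟨C v ^ 2 * (X ^ 2 * S + 2 * X * (X ^ 2 - 4) * derivative S -
    (n : R[X]) ^ 2 * (X ^ 2 - 4) * S), C v ^ 2 * (X ^ 2 - 4) ^ 2 * derivative S, ?_⟩
  linear_combination C v ^ 2 * ((n : R[X]) ^ 2 * hpell +
    ((X ^ 2 - 4) * derivative S + (n : R[X]) * Chebyshev.C R n + X * S) * hder) +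
    (2 * (n : R[X]) * C v + 1) * hunit

lemma units_zpow_eq_chebyshevS {B : Type*} [Ring B] [Algebra R B] {g : Bˣ} {t : R}
    (ht : (g : B) + ↑g⁻¹ = algebraMap R B t) (n : ℤ) :
    (↑(g ^ n) : B) =
      (Chebyshev.S R (n - 1)).eval t • (g : B) - (Chebyshev.S R (n - 2)).eval t • 1 := by
  have hinv : (↑g⁻¹ : B) = t • 1 - g := by
    rw [← Algebra.algebraMap_eq_smul_one, ← ht, add_sub_cancel_left]
  have hsq : (g : B) * g = t • (g : B) - 1 := by
    have h := g.mul_inv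
    rw [hinv, mul_sub, mul_smul_comm, mul_one] at h
    rw [← h, sub_sub_cancel]
  induction n with
  | zero => simp
  | succ n ih =>
    rw [_root_.zpow_add_one, Units.val_mul, ih, sub_mul, smul_mul_assoc, smul_mul_assoc, one_mul,
      hsq, show (n : ℤ) + 1 - 2 = n - 1 by ring, show (n : ℤ) + 1 - 1 = n - 2 + 2 by ring,
      Chebyshev.S_add_two, show (n : ℤ) - 2 + 1 = n - 1 by ring]
    simp only [eval_sub, eval_mul, eval_X]
    module
  | pred n ih =>
    have hS := Chebyshev.S_sub_two R (-n - 1)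
    rw [show -(n : ℤ) - 1 - 1 = -n - 2 by ring] at hS
    rw [_root_.zpow_sub_one, Units.val_mul, ih, sub_mul, smul_mul_assoc, smul_mul_assoc, one_mul,
      g.mul_inv, hinv, show -(n : ℤ) - 1 - 1 = -n - 2 by ring, hS]
    simp only [eval_sub, eval_mul, eval_X]
    module

lemma chebyshevS_eval_add_inv_mul_sub (z : Rˣ) (n : ℤ) :
    (Chebyshev.S R (n - 1)).eval (z + ↑z⁻¹ : R) * (z - ↑z⁻¹) = ↑(z ^ n) - ↑(z ^ (-n)) := by
  rw [← _root_.inv_zpow', units_zpow_eq_chebyshevS (t := (z + ↑z⁻¹ : R)) rfl n,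
    units_zpow_eq_chebyshevS (g := z⁻¹) (t := (z + ↑z⁻¹ : R)) (by simp [add_comm]) n]
  simp only [smul_eq_mul]
  ring

lemma coe_specialLinearGroup_zpow (M : SpecialLinearGroup (Fin 2) R) (n : ℤ) :
    (↑(M ^ n) : Matrix (Fin 2) (Fin 2) R) =
      (Chebyshev.S R (n - 1)).eval (trace (M : Matrix (Fin 2) (Fin 2) R)) • (M : Matrix _ _ R) -
        (Chebyshev.S R (n - 2)).eval (trace (M : Matrix (Fin 2) (Fin 2) R)) • 1 := by
  have htrace : ((M : GL (Fin 2) R) : Matrix (Fin 2) (Fin 2) R) + ↑(M : GL (Fin 2) R)⁻¹ =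
      algebraMap R _ (trace (M : Matrix (Fin 2) (Fin 2) R)) := by
    change (M : Matrix (Fin 2) (Fin 2) R) + adjugate (M : Matrix (Fin 2) (Fin 2) R) = _
    rw [adjugate_fin_two]
    ext i j
    fin_cases i <;> fin_cases j <;>
      simp [trace_fin_two, add_comm, Matrix.algebraMap_matrix_apply]
  simpa [← map_zpow] using units_zpow_eq_chebyshevS htrace n

end Chebyshev

section MatrixProducts

variable {R n : Type*} [Semiring R] [Fintype n] [DecidableEq n]

lemma natDegree_list_prod_apply_le {d : ℕ} (l : List (Matrix n n R[X]))
    (hl : ∀ M ∈ l, ∀ i j, (M i j).natDegree ≤ d) (i j : n) :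
    (l.prod i j).natDegree ≤ l.length * d := by
  induction l generalizing i with
  | nil =>
    rw [List.prod_nil, one_apply]
    split_ifs <;> simp
  | cons M l ih =>
    rw [List.forall_mem_cons] at hl
    rw [List.prod_cons, mul_apply, List.length_cons, add_one_mul, add_comm]
    exact natDegree_sum_le_of_forall_le _ _ fun k _ =>
      natDegree_mul_le_of_le (hl.1 i k) (ih hl.2 k)

lemma coeff_list_prod_apply_of_natDegree_le {d : ℕ} (l : List (Matrix n n R[X]))
    (hl : ∀ M ∈ l, ∀ i j, (M i j).natDegree ≤ d) (i j : n) :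
    (l.prod i j).coeff (l.length * d) = (l.map fun M => M.map fun p => p.coeff d).prod i j := by
  induction l generalizing i with
  | nil =>
    rw [List.map_nil, List.prod_nil, List.prod_nil, one_apply, one_apply]
    split_ifs <;> simp
  | cons M l ih =>
    rw [List.forall_mem_cons] at hl
    rw [List.prod_cons, mul_apply, List.length_cons, add_one_mul, add_comm, List.map_cons,
      List.prod_cons, mul_apply, finsetSum_coeff]
    refine Finset.sum_congr rfl fun k _ => ?_
    rw [coeff_mul_add_eq_of_natDegree_le (hl.1 i k) (natDegree_list_prod_apply_le l hl.2 k j),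
      ih hl.2 k, map_apply]

lemma trace_list_prod_of_apply_one_eq_zero {l : List (Matrix (Fin 2) (Fin 2) R)} (hl : l ≠ [])
    (h : ∀ M ∈ l, ∀ i, M i 1 = 0) : trace l.prod = (l.map fun M => M 0 0).prod := by
  suffices (∀ i, l.prod i 1 = 0) ∧ l.prod 0 0 = (l.map fun M => M 0 0).prod by
    rw [trace_fin_two, this.1, this.2, add_zero]
  induction l with
  | nil => contradiction
  | cons M l ih =>
    rw [List.forall_mem_cons] at h
    rcases eq_or_ne l [] with rfl | hne
    · simpa using h.1
    · obtain ⟨hcol, hdiag⟩ := ih hne h.2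
      simp [Matrix.mul_apply, Fin.sum_univ_two, h.1, hcol, hdiag]

end MatrixProducts

section RepresentationLine

variable {K : Type} [CommRing K]

/-- The upper triangular matrix with diagonal entries `z, z⁻¹` and upper right entry `1`. -/
def upperUnit (z : Kˣ) : SL2 K :=
  ⟨!![(z : K), 1; 0, ↑z⁻¹], by simp [det_fin_two_of]⟩

/-- The lower triangular matrix over `K[X]` with diagonal entries `w, w⁻¹` whose lower left entry
is chosen such that its product with `upperUnit z` has trace `X`. -/
noncomputable def lowerLine (z w : Kˣ) : SL2 K[X] :=
  ⟨!![C (w : K), 0; X - C (z * w + ↑z⁻¹ * ↑w⁻¹ : K), C ↑w⁻¹], by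
    rw [det_fin_two_of, ← C_mul, w.mul_inv, C_1, zero_mul, sub_zero]⟩

lemma coe_upperUnit (z : Kˣ) :
    (upperUnit z : Matrix (Fin 2) (Fin 2) K) = !![(z : K), 1; 0, ↑z⁻¹] := rfl

lemma coe_lowerLine (z w : Kˣ) :
    (lowerLine z w : Matrix (Fin 2) (Fin 2) K[X]) =
      !![C (w : K), 0; X - C (z * w + ↑z⁻¹ * ↑w⁻¹ : K), C ↑w⁻¹] := rfl

lemma trPoint_upperUnit_lowerLine (z w : Kˣ) :
    trPoint (SpecialLinearGroup.map C (upperUnit z)) (lowerLine z w) =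
      ![C (z + ↑z⁻¹ : K), X, C (w + ↑w⁻¹ : K)] := by
  ext i : 1
  fin_cases i
  · simp [trPoint, coe_upperUnit, trace_fin_two]
  · simp only [trPoint, coe_upperUnit, coe_lowerLine, trace_fin_two, Matrix.mul_apply,
      SpecialLinearGroup.map_apply_coe, RingHom.mapMatrix_apply, Matrix.SpecialLinearGroup.coe_mul,
      map_apply, of_apply, cons_val', cons_val_zero, cons_val_one, cons_val_fin_one,
      Fin.sum_univ_two, Fin.mk_one, Fin.isValue, map_add, map_mul, map_one, map_zero]
    ring
  · simp [trPoint, coe_lowerLine, trace_fin_two]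

lemma coe_upperUnit_zpow_mul_lowerLine_zpow (z w : Kˣ) (a b : ℤ) :
    ((SpecialLinearGroup.map C (upperUnit z) ^ a * lowerLine z w ^ b : SL2 K[X]) :
      Matrix (Fin 2) (Fin 2) K[X]) =
    ((upperUnit z ^ a : SL2 K) : Matrix (Fin 2) (Fin 2) K).map C *
      (C ((Chebyshev.S K (b - 1)).eval (w + ↑w⁻¹ : K)) •
          (lowerLine z w : Matrix (Fin 2) (Fin 2) K[X]) -
        C ((Chebyshev.S K (b - 2)).eval (w + ↑w⁻¹ : K)) • 1) := by
  have htrace : trace (lowerLine z w : Matrix (Fin 2) (Fin 2) K[X]) = C (w + ↑w⁻¹ : K) := by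
    simp [coe_lowerLine, trace_fin_two]
  rw [Matrix.SpecialLinearGroup.coe_mul, ← map_zpow, coe_specialLinearGroup_zpow (lowerLine z w),
    htrace, ← Chebyshev.map_S C, ← Chebyshev.map_S C, eval_map, eval_map, eval₂_hom, eval₂_hom]
  rfl

lemma natDegree_upperUnit_zpow_mul_lowerLine_zpow_apply_le (z w : Kˣ) (a b : ℤ) (i j : Fin 2) :
    (((SpecialLinearGroup.map C (upperUnit z) ^ a * lowerLine z w ^ b : SL2 K[X]) :
      Matrix (Fin 2) (Fin 2) K[X]) i j).natDegree ≤ 1 := by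
  rw [coe_upperUnit_zpow_mul_lowerLine_zpow, Matrix.mul_apply, coe_lowerLine]
  refine natDegree_sum_le_of_forall_le _ _ fun l _ => ?_
  rw [map_apply, Matrix.sub_apply, Matrix.smul_apply, Matrix.smul_apply, smul_eq_mul, smul_eq_mul]
  fin_cases l <;> fin_cases j <;> simp only [of_apply, cons_val', cons_val_zero, cons_val_one,
    cons_val_fin_one, one_apply, Fin.zero_eta, Fin.mk_one, Fin.isValue] <;> compute_degree!

lemma coeff_one_upperUnit_zpow_mul_lowerLine_zpow (z w : Kˣ) (a b : ℤ) :
    ((SpecialLinearGroup.map C (upperUnit z) ^ a * lowerLine z w ^ b : SL2 K[X]) :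
      Matrix (Fin 2) (Fin 2) K[X]).map (fun p => p.coeff 1) =
    !![(Chebyshev.S K (a - 1)).eval (z + ↑z⁻¹ : K) * (Chebyshev.S K (b - 1)).eval (w + ↑w⁻¹ : K), 0;
      ((upperUnit z ^ a : SL2 K) : Matrix (Fin 2) (Fin 2) K) 1 1 *
        (Chebyshev.S K (b - 1)).eval (w + ↑w⁻¹ : K), 0] := by
  have hentry : ((upperUnit z ^ a : SL2 K) : Matrix (Fin 2) (Fin 2) K) 0 1 =
      (Chebyshev.S K (a - 1)).eval (z + ↑z⁻¹ : K) := by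
    simp [coe_specialLinearGroup_zpow, coe_upperUnit, trace_fin_two]
  rw [← hentry, coe_upperUnit_zpow_mul_lowerLine_zpow, coe_lowerLine]
  ext i j
  fin_cases i <;> fin_cases j <;> simp [Matrix.mul_apply, Fin.sum_univ_two, coeff_X]

end RepresentationLine

lemma wordEval_wordOf {G : Type*} [Group G] {r : ℕ} (a b : Fin r → ℤ) (x y : G) :
    wordEval (wordOf a b) x y = (List.ofFn fun i => x ^ a i * y ^ b i).prod := by
  simp [wordEval, wordOf, map_list_prod, List.map_ofFn, Function.comp_def]

section FiberPolynomial

variable {k A B : Type*} [CommRing k] [CommRing A] [CommRing B] [Algebra k A]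

/-- Specialization of a polynomial in `s, u, t` to a polynomial in `u` alone, with `s` and `t`
replaced by elements of a `k`-algebra. -/
noncomputable def fiberPoly (s t : A) : MvPolynomial (Fin 3) k →ₐ[k] A[X] :=
  MvPolynomial.aeval ![C s, X, C t]

lemma fiberPoly_map_intCast (s t : A) (f : MvPolynomial (Fin 3) ℤ) :
    fiberPoly s t (MvPolynomial.map (Int.castRingHom k) f) = fiberPoly s t f := by
  rw [fiberPoly, fiberPoly, MvPolynomial.aeval_def, MvPolynomial.eval₂_map, MvPolynomial.aeval_def]
  congr 1
  exact RingHom.ext_int _ _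

lemma map_fiberPoly [Algebra k B] (φ : A →ₐ[k] B) (s t : A) (f : MvPolynomial (Fin 3) k) :
    (fiberPoly s t f).map φ = fiberPoly (φ s) (φ t) f := by
  suffices (mapAlgHom φ).comp (fiberPoly s t) = fiberPoly (φ s) (φ t) from
    DFunLike.congr_fun this f
  ext i
  fin_cases i <;> simp [fiberPoly]

lemma fiberPoly_aeval (s t : A) (q : MvPolynomial (Fin 3) k) (h : k[X]) :
    fiberPoly s t (aeval q h) = (h.map (algebraMap k A)).comp (fiberPoly s t q) := by
  rw [← aeval_algHom_apply, Polynomial.comp, eval₂_map, aeval_def]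
  rfl

end FiberPolynomial

lemma natDegree_fiberPoly_X_X (R : Type*) [CommRing R] (q : MvPolynomial (Fin 3) R) :
    (fiberPoly (MvPolynomial.X ⟨0, by decide⟩ : MvPolynomial {i : Fin 3 // i ≠ 1} R)
      (MvPolynomial.X ⟨2, by decide⟩) q).natDegree = MvPolynomial.degreeOf 1 q := by
  suffices fiberPoly (MvPolynomial.X ⟨0, by decide⟩ : MvPolynomial {i : Fin 3 // i ≠ 1} R)
      (MvPolynomial.X ⟨2, by decide⟩) = (MvPolynomial.optionEquivLeft R _).toAlgHom.comp
        (MvPolynomial.rename (Equiv.optionSubtypeNe (1 : Fin 3)).symm) by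
    rw [MvPolynomial.degreeOf_eq_natDegree, this]
    rfl
  ext i
  fin_cases i <;> simp [fiberPoly, Equiv.optionSubtypeNe, Equiv.optionSubtype]

lemma coe_specialLinearGroup_list_prod {n R : Type*} [Fintype n] [DecidableEq n] [CommRing R]
    (l : List (SpecialLinearGroup n R)) :
    (l.prod : Matrix n n R) = (l.map fun M : SpecialLinearGroup n R => (M : Matrix n n R)).prod :=
  map_list_prod ((Units.coeHom (Matrix n n R)).comp SpecialLinearGroup.toGL) l

lemma exists_injective_unit_add_inv_eq.{u} {A : Type u} [CommRing A] (s : A) :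
    ∃ (K : Type u) (_ : CommRing K) (φ : A →+* K) (z : Kˣ), Function.Injective φ ∧
      (z + ↑z⁻¹ : K) = φ s := by
  let p : A[X] := X ^ 2 - C s * X + 1
  have hroot : AdjoinRoot.root p * (AdjoinRoot.of p s - AdjoinRoot.root p) = 1 := by
    have h := AdjoinRoot.eval₂_root p
    simp only [p, eval₂_add, eval₂_sub, eval₂_mul, eval₂_pow, eval₂_X, eval₂_C, eval₂_one] at h
    linear_combination -h
  refine ⟨AdjoinRoot p, inferInstance, AdjoinRoot.of p,
    ⟨AdjoinRoot.root p, _, hroot, by rw [mul_comm, hroot]⟩, ?_, add_sub_cancel _ _⟩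
  nontriviality A
  have hp : p.Monic := by unfold p; monicity!
  have hdeg : p.natDegree = 2 := by unfold p; compute_degree!
  have hp_unit : ¬IsUnit p := fun hu => by simp [hp.eq_one_of_isUnit hu] at hdeg
  have := hp.free_adjoinRoot
  have : Nontrivial (AdjoinRoot p) := Ideal.Quotient.nontrivial_iff.mpr (by simpa)
  exact FaithfulSMul.algebraMap_injective A (AdjoinRoot p)

lemma exists_injective_unit_add_inv_eq_pair.{u} {A : Type u} [CommRing A] (s t : A) :
    ∃ (K : Type u) (_ : CommRing K) (φ : A →+* K) (z w : Kˣ), Function.Injective φ ∧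
      (z + ↑z⁻¹ : K) = φ s ∧ (w + ↑w⁻¹ : K) = φ t := by
  obtain ⟨K₁, _, φ, z, hφ, hz⟩ := exists_injective_unit_add_inv_eq s
  obtain ⟨K₂, _, ψ, w, hψ, hw⟩ := exists_injective_unit_add_inv_eq (φ t)
  refine ⟨K₂, inferInstance, ψ.comp φ, Units.map ψ z, w, hψ.comp hφ, ?_, hw⟩
  rw [RingHom.comp_apply, ← hz, map_add]
  rfl

namespace IsTracePolynomial

variable {r : ℕ} {a b : Fin r → ℤ} {f : MvPolynomial (Fin 3) ℤ}

lemma fiberPoly_add_inv (hf : IsTracePolynomial (wordOf a b) f) {K : Type} [CommRing K]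
    (z w : Kˣ) :
    fiberPoly (z + ↑z⁻¹ : K) (w + ↑w⁻¹ : K) f =
      trace (List.ofFn fun i => ((SpecialLinearGroup.map C (upperUnit z) ^ a i *
        lowerLine z w ^ b i : SL2 K[X]) : Matrix (Fin 2) (Fin 2) K[X])).prod := by
  have h := hf K[X] (SpecialLinearGroup.map C (upperUnit z)) (lowerLine z w)
  rw [trPoint_upperUnit_lowerLine, wordEval_wordOf, coe_specialLinearGroup_list_prod,
    List.map_ofFn, MvPolynomial.eval_map] at h
  exact h.symm

lemma natDegree_fiberPoly_add_inv_le (hf : IsTracePolynomial (wordOf a b) f) {K : Type}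
    [CommRing K] (z w : Kˣ) : (fiberPoly (z + ↑z⁻¹ : K) (w + ↑w⁻¹ : K) f).natDegree ≤ r := by
  rw [hf.fiberPoly_add_inv]
  refine natDegree_sum_le_of_forall_le _ _ fun j _ => ?_
  refine (natDegree_list_prod_apply_le (d := 1) _ ?_ j j).trans_eq (by simp)
  rw [List.forall_mem_ofFn_iff]
  exact fun i => natDegree_upperUnit_zpow_mul_lowerLine_zpow_apply_le z w (a i) (b i)

lemma coeff_fiberPoly_add_inv (hf : IsTracePolynomial (wordOf a b) f) (hr : r ≠ 0) {K : Type}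
    [CommRing K] (z w : Kˣ) :
    (fiberPoly (z + ↑z⁻¹ : K) (w + ↑w⁻¹ : K) f).coeff r =
      (∏ i, (Chebyshev.S K (a i - 1)).eval (z + ↑z⁻¹ : K)) *
        ∏ i, (Chebyshev.S K (b i - 1)).eval (w + ↑w⁻¹ : K) := by
  set l := List.ofFn fun i => ((SpecialLinearGroup.map C (upperUnit z) ^ a i *
    lowerLine z w ^ b i : SL2 K[X]) : Matrix (Fin 2) (Fin 2) K[X]) with hl
  have hdeg : ∀ M ∈ l, ∀ i j, (M i j).natDegree ≤ 1 := by
    rw [hl, List.forall_mem_ofFn_iff]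
    exact fun i => natDegree_upperUnit_zpow_mul_lowerLine_zpow_apply_le z w (a i) (b i)
  have hlen : r = l.length * 1 := by simp [hl]
  have hcoeff : (trace l.prod).coeff r = trace (l.map fun M => M.map fun p => p.coeff 1).prod := by
    simp_rw [trace_fin_two, coeff_add, hlen, coeff_list_prod_apply_of_natDegree_le l hdeg]
  rw [hf.fiberPoly_add_inv, hcoeff, trace_list_prod_of_apply_one_eq_zero, List.map_map, hl,
    List.map_ofFn, List.prod_ofFn, ← Finset.prod_mul_distrib]
  · refine Finset.prod_congr rfl fun i _ => ?_
    rw [Function.comp_apply, Function.comp_apply, coeff_one_upperUnit_zpow_mul_lowerLine_zpow]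
    rfl
  · simpa [hl] using hr
  · simp_rw [hl, List.map_ofFn, List.forall_mem_ofFn_iff, Function.comp_apply,
      coeff_one_upperUnit_zpow_mul_lowerLine_zpow]
    intro i j
    fin_cases j <;> rfl

lemma natDegree_fiberPoly_le (hf : IsTracePolynomial (wordOf a b) f) {A : Type} [CommRing A]
    (s t : A) : (fiberPoly s t f).natDegree ≤ r := by
  obtain ⟨K, _, φ, z, w, hφ, hz, hw⟩ := exists_injective_unit_add_inv_eq_pair s t
  have hmap : (fiberPoly s t f).map φ = fiberPoly (φ s) (φ t) f :=
    map_fiberPoly φ.toIntAlgHom s t f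
  rw [← natDegree_map_eq_of_injective hφ, hmap, ← hz, ← hw]
  exact hf.natDegree_fiberPoly_add_inv_le z w

lemma coeff_fiberPoly (hf : IsTracePolynomial (wordOf a b) f) (hr : r ≠ 0) {A : Type}
    [CommRing A] (s t : A) :
    (fiberPoly s t f).coeff r =
      (∏ i, (Chebyshev.S A (a i - 1)).eval s) * ∏ i, (Chebyshev.S A (b i - 1)).eval t := by
  obtain ⟨K, _, φ, z, w, hφ, hz, hw⟩ := exists_injective_unit_add_inv_eq_pair s t
  have hmap : (fiberPoly s t f).map φ = fiberPoly (φ s) (φ t) f :=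
    map_fiberPoly φ.toIntAlgHom s t f
  have heval (u : A) (n : ℤ) : φ ((Chebyshev.S A n).eval u) = (Chebyshev.S K n).eval (φ u) := by
    rw [← Chebyshev.map_S φ, eval_map_apply]
  apply hφ
  simp_rw [← coeff_map, hmap, map_mul, map_prod, heval, ← hz, ← hw]
  exact hf.coeff_fiberPoly_add_inv hr z w

end IsTracePolynomial

section Roots

lemma separable_chebyshevS_of_field {L : Type*} [Field L] {n : ℤ}
    (hn : |n| = 1 ∨ (2 * n : L) ≠ 0) : (Chebyshev.S L (n - 1)).Separable := by
  rcases hn with hn | hn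
  · rcases eq_or_eq_neg_of_abs_eq hn with rfl | rfl
    · simp [separable_one]
    · rw [show (-1 - 1 : ℤ) = -2 by ring, Chebyshev.S_neg_two, ← C_1, ← C_neg, separable_C]
      exact isUnit_one.neg
  · exact separable_chebyshevS hn.isUnit

lemma isRoot_chebyshevS_add_inv_iff {R : Type*} [CommRing R] [IsDomain R] {k : ℕ} (hk : 2 ≤ k)
    {ζ : Rˣ} (hζ : IsPrimitiveRoot ζ (2 * k)) (n : ℤ) :
    (Chebyshev.S R (n - 1)).IsRoot (ζ + ↑ζ⁻¹ : R) ↔ (k : ℤ) ∣ n := by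
  have hzpow (m : ℤ) : (↑(ζ ^ m) : R) - ↑(ζ ^ (-m)) = 0 ↔ (k : ℤ) ∣ m := by
    rw [sub_eq_zero, Units.val_inj, ← mul_inv_eq_one, _root_.zpow_neg, inv_inv,
      ← _root_.zpow_add, ← two_mul, hζ.zpow_eq_one_iff_dvd, Nat.cast_mul, Nat.cast_two,
      mul_dvd_mul_iff_left two_ne_zero]
  have hζ_ne : (ζ : R) - ↑ζ⁻¹ ≠ 0 := by
    have h := (hzpow 1).not.mpr (by exact_mod_cast Nat.dvd_one.not.mpr (by omega))
    rwa [zpow_one, _root_.zpow_neg_one] at h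
  rw [IsRoot.def, ← hzpow, ← chebyshevS_eval_add_inv_mul_sub, mul_eq_zero, or_iff_left hζ_ne]

lemma count_roots_chebyshevS_add_inv {L : Type*} [Field L] {k : ℕ} (hk : 2 ≤ k) {ζ : Lˣ}
    (hζ : IsPrimitiveRoot ζ (2 * k)) {n : ℤ} (hn : |n| = 1 ∨ (2 * n : L) ≠ 0) [DecidableEq L] :
    (Chebyshev.S L (n - 1)).roots.count (ζ + ↑ζ⁻¹ : L) = if (k : ℤ) ∣ n then 1 else 0 := by
  have hsep := separable_chebyshevS_of_field hn
  split_ifs with h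
  · refine le_antisymm (count_roots_le_one hsep _) (Multiset.one_le_count_iff_mem.mpr ?_)
    rwa [mem_roots hsep.ne_zero, isRoot_chebyshevS_add_inv_iff hk hζ]
  · rwa [Multiset.count_eq_zero, mem_roots hsep.ne_zero, isRoot_chebyshevS_add_inv_iff hk hζ]

lemma dvd_card_filter_dvd_of_prod_chebyshevS_eq_mul_pow {L ι : Type*} [Field L] [IsAlgClosed L]
    [Fintype ι] {a : ι → ℤ} (ha : ∀ i, |a i| = 1 ∨ (2 * a i : L) ≠ 0) {u v : L} (hu : u ≠ 0)
    {G : L[X]} {n : ℕ} (h : C u * ∏ i, Chebyshev.S L (a i - 1) = C v * G ^ n) {k : ℕ}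
    (hk : 2 ≤ k) : n ∣ (Finset.univ.filter fun i => (k : ℤ) ∣ a i).card := by
  classical
  rcases (Finset.univ.filter fun i => (k : ℤ) ∣ a i).eq_empty_or_nonempty with h₀ | ⟨j, hj⟩
  · simp [h₀]
  have hj : (k : ℤ) ∣ a j := by simpa using hj
  have hk₀ : (2 * k : L) ≠ 0 := by
    have hj₁ : |a j| ≠ 1 := fun h₁ => by
      have := Int.le_of_dvd one_pos (h₁ ▸ (dvd_abs _ _).mpr hj)
      omega
    obtain ⟨c, hc⟩ := hj
    have hj₂ := (ha j).resolve_left hj₁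
    rw [hc, Int.cast_mul, Int.cast_natCast, ← mul_assoc] at hj₂
    exact left_ne_zero_of_mul hj₂
  have : NeZero ((2 * k : ℕ) : L) := ⟨by exact_mod_cast hk₀⟩
  obtain ⟨ζ, hζ⟩ := HasEnoughRootsOfUnity.exists_primitiveRoot L (2 * k)
  obtain ⟨ζ, rfl⟩ := hζ.isUnit (by omega)
  rw [IsPrimitiveRoot.coe_units_iff] at hζ
  have hprod : ∏ i, Chebyshev.S L (a i - 1) ≠ 0 :=
    Finset.prod_ne_zero_iff.mpr fun i _ => (separable_chebyshevS_of_field (ha i)).ne_zero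
  have hv : v ≠ 0 := by
    rintro rfl
    simp [hu, hprod] at h
  have hcount := congrArg (fun p => p.roots.count (ζ + ↑ζ⁻¹ : L)) h
  simp only [roots_C_mul _ hu, roots_C_mul _ hv, roots_pow, Multiset.count_nsmul,
    roots_prod _ _ hprod, Multiset.count_bind, count_roots_chebyshevS_add_inv hk hζ (ha _),
    Finset.sum_map_val, Finset.sum_boole, Nat.cast_id] at hcount
  exact Dvd.intro _ hcount.symm

end Roots

section Multisets

lemma exists_eq_nsmul_of_dvd_card_filter_dvd {n : ℕ} {s : Multiset ℕ} (hs : 0 ∉ s)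
    (h : ∀ k ≠ 0, n ∣ (s.filter (k ∣ ·)).card) : ∃ t : Multiset ℕ, s = n • t := by
  suffices ∀ k, n ∣ s.count k from Multiset.exists_smul_of_dvd_count s fun k _ => this k
  refine Nat.strong_decreasing_induction ⟨s.sum, fun k hk => ?_⟩ fun k ih => ?_
  · rw [Multiset.count_eq_zero.mpr fun hks => hk.not_ge (Multiset.le_sum_of_mem hks)]
    exact dvd_zero n
  · by_cases hks : k ∈ s
    · have hmem : k ∈ {v ∈ s.toFinset | k ∣ v} := by simpa using hks
      have hcard : (s.filter (k ∣ ·)).card = ∑ v ∈ s.toFinset with k ∣ v, s.count v := by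
        rw [← Multiset.toFinset_sum_count_eq, Multiset.toFinset_filter]
        exact Finset.sum_congr rfl fun v hv =>
          Multiset.count_filter_of_pos (Finset.mem_filter.mp hv).2
      have hdvd := h k (ne_of_mem_of_not_mem hks hs)
      rw [hcard, ← Finset.add_sum_erase _ _ hmem] at hdvd
      refine (Nat.dvd_add_left (Finset.dvd_sum fun v hv => ih v ?_)).mp hdvd
      obtain ⟨hvk, hvs, hkv⟩ : v ≠ k ∧ v ∈ s ∧ k ∣ v := by simpa using hv
      exact (Nat.le_of_dvd (Nat.pos_of_ne_zero (ne_of_mem_of_not_mem hvs hs)) hkv).lt_of_ne' hvk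
    · rw [Multiset.count_eq_zero.mpr hks]
      exact dvd_zero n

lemma exists_ofFn_abs_eq_nsmul {r n m : ℕ} (hr : r = n * m) {a : Fin r → ℤ} (ha : ∀ i, a i ≠ 0)
    (h : ∀ k, 2 ≤ k → n ∣ (Finset.univ.filter fun i => ((k : ℕ) : ℤ) ∣ a i).card) :
    ∃ c : Fin m → ℤ, (∀ j, c j ≠ 0) ∧
      (↑(List.ofFn fun i => |a i|) : Multiset ℤ) = n • ↑(List.ofFn fun j => |c j|) := by
  rcases eq_or_ne n 0 with rfl | hn
  · obtain rfl : r = 0 := by rw [hr, zero_mul]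
    exact ⟨1, by simp, by simp⟩
  obtain ⟨t, ht⟩ : ∃ t : Multiset ℕ, Finset.univ.val.map (fun i => (a i).natAbs) = n • t := by
    refine exists_eq_nsmul_of_dvd_card_filter_dvd (by simpa using ha) fun k hk => ?_
    rw [Multiset.filter_map, Multiset.card_map]
    rcases (Nat.one_le_iff_ne_zero.mpr hk).eq_or_lt with rfl | hk
    · simp [hr]
    · simpa [Int.natCast_dvd] using! h k hk
  obtain ⟨l, rfl⟩ : ∃ l : List ℕ, ↑l = t := Quot.exists_rep t
  obtain rfl : m = l.length := by
    have hcard := congrArg Multiset.card ht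
    simpa [hr, hn] using hcard
  have hl : 0 ∉ l := by
    have hnl : 0 ∉ n • (l : Multiset ℕ) := by simpa [← ht] using ha
    simpa [Multiset.mem_nsmul, hn] using hnl
  refine ⟨fun j => l[j], fun j => ?_, ?_⟩
  · exact Nat.cast_ne_zero.mpr (ne_of_mem_of_not_mem (List.getElem_mem _) hl)
  · have hcast := congrArg (Multiset.map ((↑) : ℕ → ℤ)) ht
    rw [Multiset.map_map, Multiset.map_nsmul, Multiset.map_coe, ← List.ofFn_getElem_eq_map,
      Fin.univ_val_map] at hcast
    simpa [Function.comp_def] using hcast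

end Multisets

lemma chebyshevS_eval_X {R : Type*} [CommRing R] (n : ℤ) :
    (Chebyshev.S R[X] n).eval X = Chebyshev.S R n := by
  rw [← Chebyshev.map_S C, eval_map, eval₂_C_X]

lemma prod_chebyshevS_eval_two {R ι : Type*} [CommRing R] [Fintype ι] (a : ι → ℤ) :
    ∏ i, (Chebyshev.S R[X] (a i - 1)).eval 2 = C (∏ i, (a i : R)) := by
  simp only [Chebyshev.S_eval_two, map_prod, map_intCast, Int.cast_sub, Int.cast_one,
    sub_add_cancel]

lemma chebyshevS_eval_ne_zero_of_map_eq_two {A K : Type*} [CommRing A] [CommRing K] (φ : A →+* K)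
    {s : A} (hs : φ s = 2) {n : ℤ} (hn : (n : K) ≠ 0) : (Chebyshev.S A (n - 1)).eval s ≠ 0 := by
  refine ne_of_apply_ne φ ?_
  rwa [← eval_map_apply, Chebyshev.map_S, hs, Chebyshev.S_eval_two, Int.cast_sub, Int.cast_one,
    sub_add_cancel, map_zero]

namespace IsTracePolynomial

variable {r : ℕ} {a b : Fin r → ℤ} {f : MvPolynomial (Fin 3) ℤ} {A : Type} [CommRing A]
  [IsDomain A] {s t : A}

lemma natDegree_fiberPoly (hf : IsTracePolynomial (wordOf a b) f)
    (hs : ∀ i, (Chebyshev.S A (a i - 1)).eval s ≠ 0)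
    (ht : ∀ i, (Chebyshev.S A (b i - 1)).eval t ≠ 0) : (fiberPoly s t f).natDegree = r := by
  refine le_antisymm (hf.natDegree_fiberPoly_le s t) ?_
  rcases eq_or_ne r 0 with rfl | hr
  · exact Nat.zero_le _
  · refine le_natDegree_of_ne_zero ?_
    rw [hf.coeff_fiberPoly hr]
    exact mul_ne_zero (Finset.prod_ne_zero_iff.mpr fun i _ => hs i)
      (Finset.prod_ne_zero_iff.mpr fun i _ => ht i)

variable {F : Type} [Field F] [Algebra F A] {q : MvPolynomial (Fin 3) F} {h : F[X]}

lemma eq_natDegree_mul_natDegree_fiberPoly (hf : IsTracePolynomial (wordOf a b) f)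
    (hdec : MvPolynomial.map (Int.castRingHom F) f = aeval q h)
    (hs : ∀ i, (Chebyshev.S A (a i - 1)).eval s ≠ 0)
    (ht : ∀ i, (Chebyshev.S A (b i - 1)).eval t ≠ 0) :
    r = h.natDegree * (fiberPoly s t q).natDegree := by
  rw [← hf.natDegree_fiberPoly hs ht, ← fiberPoly_map_intCast (k := F), hdec, fiberPoly_aeval,
    natDegree_comp, natDegree_map]

lemma prod_chebyshevS_eval_eq_mul_pow (hf : IsTracePolynomial (wordOf a b) f)
    (hdec : MvPolynomial.map (Int.castRingHom F) f = aeval q h) (hr : r ≠ 0)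
    (hs : ∀ i, (Chebyshev.S A (a i - 1)).eval s ≠ 0)
    (ht : ∀ i, (Chebyshev.S A (b i - 1)).eval t ≠ 0) :
    (∏ i, (Chebyshev.S A (a i - 1)).eval s) * ∏ i, (Chebyshev.S A (b i - 1)).eval t =
      algebraMap F A h.leadingCoeff * (fiberPoly s t q).leadingCoeff ^ h.natDegree := by
  have hdeg : (fiberPoly s t q).natDegree ≠ 0 :=
    right_ne_zero_of_mul (hf.eq_natDegree_mul_natDegree_fiberPoly hdec hs ht ▸ hr)
  rw [← hf.coeff_fiberPoly hr, ← leadingCoeff_map (f := algebraMap F A),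
    ← natDegree_map (p := h) (algebraMap F A), ← leadingCoeff_comp hdeg, ← fiberPoly_aeval, ← hdec,
    fiberPoly_map_intCast, leadingCoeff, hf.natDegree_fiberPoly hs ht]

theorem eq_natDegree_mul_degreeOf (hf : IsTracePolynomial (wordOf a b) f)
    (hdec : MvPolynomial.map (Int.castRingHom F) f = aeval q h)
    (ha : ∀ i, (a i : F) ≠ 0) (hb : ∀ i, (b i : F) ≠ 0) :
    r = h.natDegree * MvPolynomial.degreeOf 1 q := by
  let φ : MvPolynomial {i : Fin 3 // i ≠ 1} F →+* F := MvPolynomial.eval fun _ => 2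
  rw [← natDegree_fiberPoly_X_X F q]
  exact hf.eq_natDegree_mul_natDegree_fiberPoly hdec
    (fun i => chebyshevS_eval_ne_zero_of_map_eq_two φ (MvPolynomial.eval_X _) (ha i))
    (fun i => chebyshevS_eval_ne_zero_of_map_eq_two φ (MvPolynomial.eval_X _) (hb i))

variable {L : Type} [Field L] [IsAlgClosed L] [Algebra F L]

theorem natDegree_dvd_card_filter_dvd_left (hf : IsTracePolynomial (wordOf a b) f)
    (hdec : MvPolynomial.map (Int.castRingHom F) f = aeval q h)
    (ha : ∀ i, |a i| = 1 ∨ (2 * a i : L) ≠ 0) (hb : ∀ i, (b i : L) ≠ 0) {k : ℕ} (hk : 2 ≤ k) :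
    h.natDegree ∣ (Finset.univ.filter fun i => (k : ℤ) ∣ a i).card := by
  rcases eq_or_ne r 0 with rfl | hr
  · simp
  have hprod := hf.prod_chebyshevS_eval_eq_mul_pow (s := (X : L[X])) (t := 2) hdec hr
    (fun i => by rw [chebyshevS_eval_X]; exact (separable_chebyshevS_of_field (ha i)).ne_zero)
    (fun i => chebyshevS_eval_ne_zero_of_map_eq_two (evalRingHom 2) (map_ofNat _ 2) (hb i))
  simp only [chebyshevS_eval_X, prod_chebyshevS_eval_two] at hprod
  rw [mul_comm] at hprod
  exact dvd_card_filter_dvd_of_prod_chebyshevS_eq_mul_pow ha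
    (Finset.prod_ne_zero_iff.mpr fun i _ => hb i) hprod hk

theorem natDegree_dvd_card_filter_dvd_right (hf : IsTracePolynomial (wordOf a b) f)
    (hdec : MvPolynomial.map (Int.castRingHom F) f = aeval q h)
    (ha : ∀ i, (a i : L) ≠ 0) (hb : ∀ i, |b i| = 1 ∨ (2 * b i : L) ≠ 0) {k : ℕ} (hk : 2 ≤ k) :
    h.natDegree ∣ (Finset.univ.filter fun i => (k : ℤ) ∣ b i).card := by
  rcases eq_or_ne r 0 with rfl | hr
  · simp
  have hprod := hf.prod_chebyshevS_eval_eq_mul_pow (s := 2) (t := (X : L[X])) hdec hr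
    (fun i => chebyshevS_eval_ne_zero_of_map_eq_two (evalRingHom 2) (map_ofNat _ 2) (ha i))
    (fun i => by rw [chebyshevS_eval_X]; exact (separable_chebyshevS_of_field (hb i)).ne_zero)
  simp only [chebyshevS_eval_X, prod_chebyshevS_eval_two] at hprod
  exact dvd_card_filter_dvd_of_prod_chebyshevS_eq_mul_pow hb
    (Finset.prod_ne_zero_iff.mpr fun i _ => ha i) hprod hk

end IsTracePolynomial

lemma intCast_ne_zero_of_abs_eq_one_or {R : Type*} [Ring R] [Nontrivial R] {n : ℤ}
    (hn : |n| = 1 ∨ (2 * n : R) ≠ 0) : (n : R) ≠ 0 := by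
  rcases hn with hn | hn
  · rcases eq_or_eq_neg_of_abs_eq hn with rfl | rfl <;> simp
  · exact right_ne_zero_of_mul hn

lemma abs_eq_one_or_two_mul_intCast_ne_zero {F : Type*} [Field F] {n : ℤ} (hn : n ≠ 0)
    (hF : Nonempty (F ≃+* ℚ) ∨ ∃ p : ℕ, p.Prime ∧ Nonempty (F ≃+* ZMod p) ∧ n.natAbs < p) :
    |n| = 1 ∨ (2 * n : F) ≠ 0 := by
  rcases hF with ⟨⟨e⟩⟩ | ⟨p, hp, ⟨e⟩, hnp⟩
  · have : CharZero F := (RingHom.charZero_iff (ϕ := e.toRingHom) e.injective).mpr inferInstance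
    exact .inr (by exact_mod_cast mul_ne_zero two_ne_zero hn)
  · have : CharP F p := (RingHom.charP_iff e.toRingHom e.injective p).mpr inferInstance
    rw [or_iff_not_imp_right, not_not]
    intro h
    have hdvd : (p : ℤ) ∣ 2 * n := (CharP.intCast_eq_zero_iff F p _).mp (by exact_mod_cast h)
    have hpn : ¬(p : ℤ) ∣ n := fun hpn =>
      hnp.not_ge (Nat.le_of_dvd (Int.natAbs_pos.mpr hn) (Int.natCast_dvd.mp hpn))
    have hp₂ := Int.le_of_dvd two_pos
      (((Nat.prime_iff_prime_int.mp hp).dvd_or_dvd hdvd).resolve_right hpn)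
    rw [Int.abs_eq_natAbs]
    omega

theorem trace_similar_power_of_composite_trace_polynomial_general {r : ℕ} (a b : Fin r → ℤ)
    (f : MvPolynomial (Fin 3) ℤ) (hf : IsTracePolynomial (wordOf a b) f) (F : Type) [Field F]
    (ha : ∀ i, |a i| = 1 ∨ (2 * a i : F) ≠ 0) (hb : ∀ i, |b i| = 1 ∨ (2 * b i : F) ≠ 0)
    (q : MvPolynomial (Fin 3) F) (h : Polynomial F) (n m : ℕ)
    (hn : h.natDegree = n) (hm : MvPolynomial.degreeOf 1 q = m)
    (hdec : MvPolynomial.map (Int.castRingHom F) f = Polynomial.aeval q h) :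
    r = n * m ∧
      ∃ c d : Fin m → ℤ, (∀ j, c j ≠ 0 ∧ d j ≠ 0) ∧
        (↑(List.ofFn fun i => |a i|) : Multiset ℤ) = n • ↑(List.ofFn fun j => |c j|) ∧
        (↑(List.ofFn fun i => |b i|) : Multiset ℤ) = n • ↑(List.ofFn fun j => |d j|) := by
  subst hn hm
  have ha₀ (i) : (a i : F) ≠ 0 := intCast_ne_zero_of_abs_eq_one_or (ha i)
  have hb₀ (i) : (b i : F) ≠ 0 := intCast_ne_zero_of_abs_eq_one_or (hb i)
  have hr := hf.eq_natDegree_mul_degreeOf hdec ha₀ hb₀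
  let L := AlgebraicClosure F
  have hL {x : ℤ} (hx : |x| = 1 ∨ (2 * x : F) ≠ 0) : |x| = 1 ∨ (2 * x : L) ≠ 0 :=
    hx.imp_right fun hx => by
      simpa only [map_mul, map_ofNat, map_intCast] using (map_ne_zero (algebraMap F L)).mpr hx
  obtain ⟨c, hc, hac⟩ := exists_ofFn_abs_eq_nsmul hr
    (fun i => ne_of_apply_ne ((↑) : ℤ → F) (by simpa using ha₀ i)) fun k hk =>
    hf.natDegree_dvd_card_filter_dvd_left hdec (fun i => hL (ha i))
      (fun i => intCast_ne_zero_of_abs_eq_one_or (hL (hb i))) hk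
  obtain ⟨d, hd, hbd⟩ := exists_ofFn_abs_eq_nsmul hr
    (fun i => ne_of_apply_ne ((↑) : ℤ → F) (by simpa using hb₀ i)) fun k hk =>
    hf.natDegree_dvd_card_filter_dvd_right hdec
      (fun i => intCast_ne_zero_of_abs_eq_one_or (hL (ha i))) (fun i => hL (hb i)) hk
  exact ⟨hr, c, d, fun j => ⟨hc j, hd j⟩, hac, hbd⟩

theorem trace_similar_power_of_composite_trace_polynomial {r : ℕ}
    (a b : Fin r → ℤ) (hab : ∀ i, a i ≠ 0 ∧ b i ≠ 0)
    (f : MvPolynomial (Fin 3) ℤ) (hf : IsTracePolynomial (wordOf a b) f)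
    (F : Type) [Field F]
    (hF : Nonempty (F ≃+* ℚ) ∨ ∃ p : ℕ, p.Prime ∧ Nonempty (F ≃+* ZMod p) ∧
      ∀ i, (a i).natAbs < p ∧ (b i).natAbs < p)
    (q : MvPolynomial (Fin 3) F) (h : Polynomial F) (n m : ℕ)
    (hn : h.natDegree = n) (hm : MvPolynomial.degreeOf 1 q = m)
    (hdec : MvPolynomial.map (Int.castRingHom F) f = Polynomial.aeval q h) :
    r = n * m ∧
      ∃ c d : Fin m → ℤ, (∀ j, c j ≠ 0 ∧ d j ≠ 0) ∧
        (↑(List.ofFn fun i => |a i|) : Multiset ℤ) = n • ↑(List.ofFn fun j => |c j|) ∧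
        (↑(List.ofFn fun i => |b i|) : Multiset ℤ) = n • ↑(List.ofFn fun j => |d j|) :=
  trace_similar_power_of_composite_trace_polynomial_general a b f hf F
    (fun i => abs_eq_one_or_two_mul_intCast_ne_zero (hab i).1 <|
      hF.imp_right fun ⟨p, hp, e, hlt⟩ => ⟨p, hp, e, (hlt i).1⟩)
    (fun i => abs_eq_one_or_two_mul_intCast_ne_zero (hab i).2 <|
      hF.imp_right fun ⟨p, hp, e, hlt⟩ => ⟨p, hp, e, (hlt i).2⟩) q h n m hn hm hdec
end
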